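/- Let Ω be an open set in ℝ⁴ with an almost complex structure J, let r be a C² strictly J-plurisubharmonic function on Ω, and let D = {x ∈ Ω : r(x) < 0} be relatively compact in Ω with dr ≠ 0 on ∂D. Let x⁰ ∈ D and p ∈ ∂D, and let (f^ν) be a sequence of (J,J)-holomorphic diffeomorphisms of D onto itself with f^ν(x⁰) → p. Then for every compact set K ⊆ Δ with 0 ∈ K one has sup { ‖f^ν(f(ζ)) − p‖ : ζ ∈ K, f a J-holomorphic disc f : Δ → D with f(0) = x⁰ } → 0 as ν → ∞; that is, f^ν ∘ f(K) → p uniformly with respect to all J-holomorphic discs f in D centered at x⁰. -/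

import Mathlib

open Metric Set Filter Topology Asymptotics

noncomputable section

/-- The standard complex structure `J_st` (multiplication by `i`) on a complex
normed space, viewed as a real-linear endomorphism. -/
def Jst (E : Type*) [NormedAddCommGroup E] [NormedSpace ℂ E] : E →L[ℝ] E :=
  ContinuousLinearMap.restrictScalars ℝ (Complex.I • ContinuousLinearMap.id ℂ E)

variable {E F : Type*} [NormedAddCommGroup E] [NormedSpace ℂ E]
  [NormedAddCommGroup F] [NormedSpace ℂ F]

/-- `J` is an almost complex structure on the set `Ω`: a smooth field of real-linear
endomorphisms with `J x ∘ J x = -id`. -/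
structure IsACS (Ω : Set E) (J : E → E →L[ℝ] E) : Prop where
  smooth : ContDiffOn ℝ (⊤ : ℕ∞) J Ω
  sq : ∀ x ∈ Ω, (J x).comp (J x) = -(ContinuousLinearMap.id ℝ E)

/-- `f` is `(J', J)`-holomorphic on `s`: `Df(x) ∘ J'(x) = J(f x) ∘ Df(x)`. -/
def IsHolomorphicMapOn (J' : E → E →L[ℝ] E) (J : F → F →L[ℝ] F) (f : E → F)
    (s : Set E) : Prop :=
  ∀ x ∈ s, DifferentiableAt ℝ f x ∧
    (fderiv ℝ f x).comp (J' x) = (J (f x)).comp (fderiv ℝ f x)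

/-- The Levi form `L^J(r)(x)(X) = -d(J⋆dr)(x)(X, J x X)` where `J⋆dr` is the 1-form
`X ↦ dr(x)(J x X)` and `dω(x)(X,Y) = (Dω(x)X)(Y) - (Dω(x)Y)(X)`. -/
def leviForm (J : E → E →L[ℝ] E) (r : E → ℝ) (x : E) (X : E) : ℝ :=
  -((fderiv ℝ (fun y => (fderiv ℝ r y).comp (J y)) x X) (J x X)
    - (fderiv ℝ (fun y => (fderiv ℝ r y).comp (J y)) x (J x X)) X)

/-- `r` is strictly `J`-plurisubharmonic on `s`. -/
def StrictPSHOn (J : E → E →L[ℝ] E) (r : E → ℝ) (s : Set E) : Prop :=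
  ∀ x ∈ s, ∀ X : E, X ≠ 0 → 0 < leviForm J r x X

/-- `r` is `J`-plurisubharmonic on `s` (nonnegative Levi form). -/
def PSHOn (J : E → E →L[ℝ] E) (r : E → ℝ) (s : Set E) : Prop :=
  ∀ x ∈ s, ∀ X : E, 0 ≤ leviForm J r x X

/-- `C⁰` norm of `g` on `K`. -/
def c0Norm {G : Type*} [NormedAddCommGroup G] (g : E → G) (K : Set E) : ℝ :=
  ⨆ x : K, ‖g (x : E)‖

/-- `C¹` norm of `g` on `K`. -/
def c1Norm {G : Type*} [NormedAddCommGroup G] [NormedSpace ℝ G] (g : E → G) (K : Set E) : ℝ :=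
  ⨆ x : K, max ‖g (x : E)‖ ‖fderiv ℝ g (x : E)‖

/-- `C¹` distance between `g` and `h` on `K`. -/
def c1Dist {G : Type*} [NormedAddCommGroup G] [NormedSpace ℝ G] (g h : E → G) (K : Set E) : ℝ :=
  ⨆ x : K, max ‖g (x : E) - h (x : E)‖ ‖fderiv ℝ g (x : E) - fderiv ℝ h (x : E)‖

/-- `C²` distance between `g` and `h` on `K`. -/
def c2Dist {G : Type*} [NormedAddCommGroup G] [NormedSpace ℝ G] (g h : E → G) (K : Set E) : ℝ :=
  ⨆ x : K, max ‖g (x : E) - h (x : E)‖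
    (max ‖fderiv ℝ g (x : E) - fderiv ℝ h (x : E)‖
      ‖fderiv ℝ (fderiv ℝ g) (x : E) - fderiv ℝ (fderiv ℝ h) (x : E)‖)

/-- A `J`-holomorphic disc in `D`: a map from the unit disc `Δ ⊂ ℂ` to `D` satisfying
`Df(ζ) ∘ J_st = J(f ζ) ∘ Df(ζ)`. -/
def IsJDisc (J : F → F →L[ℝ] F) (D : Set F) (f : ℂ → F) : Prop :=
  MapsTo f (ball (0 : ℂ) 1) D ∧
  ∀ ζ ∈ ball (0 : ℂ) 1, DifferentiableAt ℝ f ζ ∧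
    (fderiv ℝ f ζ).comp (Jst ℂ) = (J (f ζ)).comp (fderiv ℝ f ζ)

/-- The Kobayashi–Royden infinitesimal pseudometric of `(D, J)`. -/
def kobayashiMetric (J : F → F →L[ℝ] F) (D : Set F) (p : F) (v : F) : ℝ :=
  sInf {α : ℝ | 0 < α ∧ ∃ f : ℂ → F, IsJDisc J D f ∧ f 0 = p ∧
    fderiv ℝ f 0 1 = α⁻¹ • v}

/-- The integrated Kobayashi pseudodistance of `(D, J)`. -/
def kobayashiDist (J : F → F →L[ℝ] F) (D : Set F) (p q : F) : ℝ :=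
  sInf {d : ℝ | ∃ γ : ℝ → F, ContDiffOn ℝ 1 γ (Icc 0 1) ∧ MapsTo γ (Icc 0 1) D ∧
    γ 0 = p ∧ γ 1 = q ∧ d = ∫ t in (0:ℝ)..1, kobayashiMetric J D (γ t) (deriv γ t)}

/-- `f` is a smooth diffeomorphism from `s` onto `t` with inverse `g`. -/
def IsDiffeoOn (f : E → F) (g : F → E) (s : Set E) (t : Set F) : Prop :=
  ContDiffOn ℝ (⊤ : ℕ∞) f s ∧ ContDiffOn ℝ (⊤ : ℕ∞) g t ∧ MapsTo f s t ∧ MapsTo g t s ∧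
  (∀ x ∈ s, g (f x) = x) ∧ (∀ y ∈ t, f (g y) = y)

/-- The Laplacian of a real function on `ℂ ≅ ℝ²`. -/
def lapR (g : ℂ → ℝ) (ζ : ℂ) : ℝ :=
  fderiv ℝ (fun w => fderiv ℝ g w 1) ζ 1
    + fderiv ℝ (fun w => fderiv ℝ g w Complex.I) ζ Complex.I

/-- The Wirtinger derivative `∂g/∂ζ`. -/
def wirtingerD (g : ℂ → ℂ) (ζ : ℂ) : ℂ :=
  (fderiv ℝ g ζ 1 - Complex.I * fderiv ℝ g ζ Complex.I) / 2

/-- The Wirtinger derivative `∂g/∂ζ̄`. -/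
def wirtingerDbar (g : ℂ → ℂ) (ζ : ℂ) : ℂ :=
  (fderiv ℝ g ζ 1 + Complex.I * fderiv ℝ g ζ Complex.I) / 2

/-- The coordinates of a point of `ℂ²`. -/
def coord2 (z : ℂ × ℂ) : Fin 2 → ℂ := ![z.1, z.2]

abbrev E2 := EuclideanSpace ℂ (Fin 2)

section LineIntegrals

variable {V : Type*} [NormedAddCommGroup V] [NormedSpace ℝ V] [CompleteSpace V]

theorem intervalIntegrable_clm_apply_deriv {ω : ℝ → V →L[ℝ] ℝ} {b b' : ℝ → V} {s t L : ℝ}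
    (hω : ContinuousOn ω (uIcc s t)) (hb : ∀ τ ∈ uIcc s t, HasDerivAt b (b' τ) τ)
    (hL : ∀ τ ∈ uIcc s t, ‖b' τ‖ ≤ L) :
    IntervalIntegrable (fun τ => ω τ (b' τ)) MeasureTheory.volume s t := by
  obtain ⟨C, hC⟩ := isCompact_uIcc.exists_bound_of_continuousOn hω
  have hC' : ∀ τ ∈ uIcc s t, ‖ω τ (deriv b τ)‖ ≤ C * L := fun τ hτ => by
    rw [(hb τ hτ).deriv]
    exact (ω τ).le_of_opNorm_le_of_le (hC τ hτ) (hL τ hτ)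
  have key : IntervalIntegrable (fun τ => ω τ (deriv b τ)) MeasureTheory.volume s t := by
    rw [intervalIntegrable_iff]
    refine MeasureTheory.IntegrableOn.of_bound (by simp) ?_ (C * L) ?_
    · have h1 : MeasureTheory.AEStronglyMeasurable ω
          (MeasureTheory.volume.restrict (uIoc s t)) :=
        (hω.mono uIoc_subset_uIcc).aestronglyMeasurable measurableSet_uIoc
      have h2 := (stronglyMeasurable_deriv b).aestronglyMeasurable
        (μ := MeasureTheory.volume.restrict (uIoc s t))
      exact isBoundedBilinearMap_apply.continuous.comp_aestronglyMeasurable (h1.prodMk h2)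
    · exact (MeasureTheory.ae_restrict_iff' measurableSet_uIoc).2
        (.of_forall fun τ hτ => hC' τ (uIoc_subset_uIcc hτ))
  refine key.congr fun τ hτ => ?_
  simp only [(hb τ (uIoc_subset_uIcc hτ)).deriv]

/-- Replacing `ω` and `b` by affine approximations changes `∫ ω (db)` by a boundary term and a
small error. -/
theorem abs_integral_clm_apply_deriv_sub_le {ω : ℝ → V →L[ℝ] ℝ} {b b' : ℝ → V} {s t L ε : ℝ}
    (hst : s ≤ t) (hω : ContinuousOn ω (uIcc s t))
    (hb : ∀ τ ∈ uIcc s t, HasDerivAt b (b' τ) τ) (hL : ∀ τ ∈ uIcc s t, ‖b' τ‖ ≤ L)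
    (ω₀ ω₁ : V →L[ℝ] ℝ) (b₀ b₁ : V)
    (hω₁ : ∀ τ ∈ uIcc s t, ‖ω τ - (ω₀ + τ • ω₁)‖ ≤ ε)
    (hb₁ : ∀ τ ∈ uIcc s t, ‖b τ - (b₀ + τ • b₁)‖ ≤ ε) :
    |(∫ τ in s..t, ω τ (b' τ)) - ((t - s) * ω₀ b₁ + (t ^ 2 - s ^ 2) / 2 * ω₁ b₁
      + (ω₀ + t • ω₁) (b t - (b₀ + t • b₁)) - (ω₀ + s • ω₁) (b s - (b₀ + s • b₁)))|
      ≤ ε * (L + ‖ω₁‖) * (t - s) := by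
  have hbc : ContinuousOn b (uIcc s t) := fun τ hτ => (hb τ hτ).continuousAt.continuousWithinAt
  set P : ℝ → ℝ := fun τ => τ * ω₀ b₁ + τ ^ 2 / 2 * ω₁ b₁
      + (ω₀ + τ • ω₁) (b τ - (b₀ + τ • b₁)) with hP
  set P' : ℝ → ℝ := fun τ => (ω₀ + τ • ω₁) (b' τ) + ω₁ (b τ - (b₀ + τ • b₁)) with hP'
  have hder : ∀ τ ∈ uIcc s t, HasDerivAt P (P' τ) τ := fun τ hτ => by
    have h1 : HasDerivAt (fun τ : ℝ => b τ - (b₀ + τ • b₁)) (b' τ - b₁) τ := by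
      simpa using (hb τ hτ).fun_sub (((hasDerivAt_id' τ).smul_const b₁).const_add b₀)
    have h2 : HasDerivAt (fun τ : ℝ => ω₀ + τ • ω₁) ω₁ τ := by
      simpa using ((hasDerivAt_id' τ).smul_const ω₁).const_add ω₀
    have h3 := h2.clm_apply h1
    have h4 : HasDerivAt (fun τ : ℝ => τ * ω₀ b₁ + τ ^ 2 / 2 * ω₁ b₁)
        (ω₀ b₁ + τ * ω₁ b₁) τ := by
      refine (((hasDerivAt_id' τ).mul_const (ω₀ b₁)).fun_add
        (((hasDerivAt_pow 2 τ).div_const 2).mul_const (ω₁ b₁))).congr_deriv ?_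
      norm_num
    refine (h4.fun_add h3).congr_deriv ?_
    simp only [hP', add_apply, smul_apply, map_sub, smul_eq_mul]
    ring
  have hlin : ContinuousOn (fun τ : ℝ => ω₀ + τ • ω₁) (uIcc s t) := by fun_prop
  have hint1 := intervalIntegrable_clm_apply_deriv hω hb hL
  have hint2 : IntervalIntegrable P' MeasureTheory.volume s t := by
    refine (intervalIntegrable_clm_apply_deriv hlin hb hL).add ?_
    apply ContinuousOn.intervalIntegrable
    fun_prop
  have hFTC := intervalIntegral.integral_eq_sub_of_hasDerivAt hder hint2
  have : (t - s) * ω₀ b₁ + (t ^ 2 - s ^ 2) / 2 * ω₁ b₁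
      + (ω₀ + t • ω₁) (b t - (b₀ + t • b₁)) - (ω₀ + s • ω₁) (b s - (b₀ + s • b₁))
      = P t - P s := by simp only [hP]; ring
  rw [this, ← hFTC, ← intervalIntegral.integral_sub hint1 hint2]
  have hbd : ∀ τ ∈ uIoc s t, ‖ω τ (b' τ) - P' τ‖ ≤ ε * (L + ‖ω₁‖) := fun τ hτ => by
    have hτ' := uIoc_subset_uIcc hτ
    have e : ω τ (b' τ) - P' τ = (ω τ - (ω₀ + τ • ω₁)) (b' τ) - ω₁ (b τ - (b₀ + τ • b₁)) := by
      simp only [hP', sub_apply]; ring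
    rw [e]
    have h1 := (ω τ - (ω₀ + τ • ω₁)).le_of_opNorm_le_of_le (hω₁ τ hτ') (hL τ hτ')
    have h2 := ω₁.le_of_opNorm_le_of_le le_rfl (hb₁ τ hτ')
    calc _ ≤ _ := norm_sub_le _ _
      _ ≤ ε * L + ‖ω₁‖ * ε := add_le_add h1 h2
      _ = _ := by ring
  have := intervalIntegral.norm_integral_le_of_norm_le_const hbd
  rwa [abs_of_nonneg (sub_nonneg.2 hst), Real.norm_eq_abs] at this

end LineIntegrals

section Goursat

variable {V : Type*} [NormedAddCommGroup V] [NormedSpace ℝ V]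

/-- The integral of the one-form `α (dβ)` along `τ ↦ p + τ v`, `s ≤ τ ≤ t`. -/
def edgeIntegral (α : ℂ → V →L[ℝ] ℝ) (β : ℂ → V) (p v : ℂ) (s t : ℝ) : ℝ :=
  ∫ τ in s..t, α (p + τ • v) (fderiv ℝ β (p + τ • v) v)

/-- The integral of `α (dβ)` along the boundary of the rectangle `[x₁, x₂] × [y₁, y₂]`. -/
def rectIntegral (α : ℂ → V →L[ℝ] ℝ) (β : ℂ → V) (x₁ x₂ y₁ y₂ : ℝ) : ℝ :=
  edgeIntegral α β (y₁ • Complex.I) 1 x₁ x₂ + edgeIntegral α β (x₂ • 1) Complex.I y₁ y₂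
    - edgeIntegral α β (y₂ • Complex.I) 1 x₁ x₂ - edgeIntegral α β (x₁ • 1) Complex.I y₁ y₂

variable {α : ℂ → V →L[ℝ] ℝ} {β : ℂ → V}

theorem hasDerivAt_comp_line {W : Type*} [NormedAddCommGroup W] [NormedSpace ℝ W] {β : ℂ → W}
    {p v : ℂ} {τ : ℝ} (h : DifferentiableAt ℝ β (p + τ • v)) :
    HasDerivAt (fun τ : ℝ => β (p + τ • v)) (fderiv ℝ β (p + τ • v) v) τ := by
  have h1 : HasDerivAt (fun τ : ℝ => p + τ • v) v τ := by
    simpa using ((hasDerivAt_id' τ).smul_const v).const_add p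
  exact h.hasFDerivAt.comp_hasDerivAt τ h1

variable [CompleteSpace V]

theorem edgeIntegral_intervalIntegrable {p v : ℂ} {s t L : ℝ} (hv : ‖v‖ ≤ 1)
    (hα : ∀ τ ∈ uIcc s t, DifferentiableAt ℝ α (p + τ • v))
    (hβ : ∀ τ ∈ uIcc s t, DifferentiableAt ℝ β (p + τ • v))
    (hL : ∀ τ ∈ uIcc s t, ‖fderiv ℝ β (p + τ • v)‖ ≤ L) :
    IntervalIntegrable (fun τ : ℝ => α (p + τ • v) (fderiv ℝ β (p + τ • v) v))
      MeasureTheory.volume s t := by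
  refine intervalIntegrable_clm_apply_deriv (ω := fun τ : ℝ => α (p + τ • v))
    (fun τ hτ => (hasDerivAt_comp_line (hα τ hτ)).continuousAt.continuousWithinAt)
    (fun τ hτ => hasDerivAt_comp_line (hβ τ hτ)) (L := L) fun τ hτ => ?_
  calc _ ≤ ‖fderiv ℝ β (p + τ • v)‖ * ‖v‖ := ContinuousLinearMap.le_opNorm _ _
    _ ≤ L * 1 := by
      gcongr
      · exact (norm_nonneg _).trans (hL τ hτ)
      · exact hL τ hτ
    _ = L := mul_one L

theorem abs_edgeIntegral_sub_le {p v : ℂ} {s t L ε : ℝ} (hst : s ≤ t) (hv : ‖v‖ ≤ 1)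
    (hα : ∀ τ ∈ uIcc s t, DifferentiableAt ℝ α (p + τ • v))
    (hβ : ∀ τ ∈ uIcc s t, DifferentiableAt ℝ β (p + τ • v))
    (hL : ∀ τ ∈ uIcc s t, ‖fderiv ℝ β (p + τ • v)‖ ≤ L)
    (A : ℂ →L[ℝ] V →L[ℝ] ℝ) (B : ℂ →L[ℝ] V) (α₀ : V →L[ℝ] ℝ) (β₀ : V) (hε : 0 ≤ ε)
    (hA : ∀ τ ∈ uIcc s t, ‖α (p + τ • v) - (α₀ + A (p + τ • v))‖ ≤ ε)
    (hB : ∀ τ ∈ uIcc s t, ‖β (p + τ • v) - (β₀ + B (p + τ • v))‖ ≤ ε) :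
    |edgeIntegral α β p v s t - ((t - s) * (α₀ + A p) (B v) + (t ^ 2 - s ^ 2) / 2 * A v (B v)
      + (α₀ + A (p + t • v)) (β (p + t • v) - (β₀ + B (p + t • v)))
      - (α₀ + A (p + s • v)) (β (p + s • v) - (β₀ + B (p + s • v))))|
      ≤ ε * (L + ‖A‖) * (t - s) := by
  have e1 : ∀ τ : ℝ, α₀ + A (p + τ • v) = (α₀ + A p) + τ • A v := fun τ => by
    rw [map_add, map_smul, add_assoc]
  have e2 : ∀ τ : ℝ, β₀ + B (p + τ • v) = (β₀ + B p) + τ • B v := fun τ => by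
    rw [map_add, map_smul, add_assoc]
  have := abs_integral_clm_apply_deriv_sub_le (ω := fun τ : ℝ => α (p + τ • v))
    (b := fun τ : ℝ => β (p + τ • v)) (b' := fun τ : ℝ => fderiv ℝ β (p + τ • v) v) (L := L)
    (ε := ε) hst
    (fun τ hτ => (hasDerivAt_comp_line (hα τ hτ)).continuousAt.continuousWithinAt)
    (fun τ hτ => hasDerivAt_comp_line (hβ τ hτ))
    (fun τ hτ => by
      calc _ ≤ ‖fderiv ℝ β (p + τ • v)‖ * ‖v‖ := ContinuousLinearMap.le_opNorm _ _
        _ ≤ L * 1 := by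
          gcongr
          · exact (norm_nonneg _).trans (hL τ hτ)
          · exact hL τ hτ
        _ = L := mul_one L)
    (α₀ + A p) (A v) (β₀ + B p) (B v)
    (fun τ hτ => by rw [← e1]; exact hA τ hτ) (fun τ hτ => by rw [← e2]; exact hB τ hτ)
  simp only [← e1, ← e2] at this
  refine this.trans ?_
  have : ‖A v‖ ≤ ‖A‖ := by
    simpa using A.le_of_opNorm_le_of_le le_rfl hv
  gcongr

theorem smul_I_add_smul_one_mem {x₁ x₂ y₁ y₂ x y : ℝ} (hx : x ∈ uIcc x₁ x₂)
    (hy : y ∈ uIcc y₁ y₂) : y • Complex.I + x • (1 : ℂ) ∈ uIcc x₁ x₂ ×ℂ uIcc y₁ y₂ := by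
  simpa [Complex.mem_reProdIm] using ⟨hx, hy⟩

theorem smul_one_add_smul_I_mem {x₁ x₂ y₁ y₂ x y : ℝ} (hx : x ∈ uIcc x₁ x₂)
    (hy : y ∈ uIcc y₁ y₂) : x • (1 : ℂ) + y • Complex.I ∈ uIcc x₁ x₂ ×ℂ uIcc y₁ y₂ := by
  simpa [Complex.mem_reProdIm] using ⟨hx, hy⟩

theorem abs_rectIntegral_sub_le {x₁ x₂ y₁ y₂ L ε : ℝ} (hx : x₁ ≤ x₂) (hy : y₁ ≤ y₂)
    (hα : ∀ z ∈ uIcc x₁ x₂ ×ℂ uIcc y₁ y₂, DifferentiableAt ℝ α z)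
    (hβ : ∀ z ∈ uIcc x₁ x₂ ×ℂ uIcc y₁ y₂, DifferentiableAt ℝ β z)
    (hL : ∀ z ∈ uIcc x₁ x₂ ×ℂ uIcc y₁ y₂, ‖fderiv ℝ β z‖ ≤ L)
    (A : ℂ →L[ℝ] V →L[ℝ] ℝ) (B : ℂ →L[ℝ] V) (α₀ : V →L[ℝ] ℝ) (β₀ : V) (hε : 0 ≤ ε)
    (hA : ∀ z ∈ uIcc x₁ x₂ ×ℂ uIcc y₁ y₂, ‖α z - (α₀ + A z)‖ ≤ ε)
    (hB : ∀ z ∈ uIcc x₁ x₂ ×ℂ uIcc y₁ y₂, ‖β z - (β₀ + B z)‖ ≤ ε) :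
    |rectIntegral α β x₁ x₂ y₁ y₂
        - (x₂ - x₁) * (y₂ - y₁) * (A 1 (B Complex.I) - A Complex.I (B 1))|
      ≤ 2 * ε * (L + ‖A‖) * ((x₂ - x₁) + (y₂ - y₁)) := by
  have h1 := fun y (hy : y ∈ uIcc y₁ y₂) => abs_edgeIntegral_sub_le (p := y • Complex.I) (v := 1)
    (L := L) (ε := ε) hx (by simp) (fun τ hτ => hα _ (smul_I_add_smul_one_mem hτ hy))
    (fun τ hτ => hβ _ (smul_I_add_smul_one_mem hτ hy))
    (fun τ hτ => hL _ (smul_I_add_smul_one_mem hτ hy)) A B α₀ β₀ hε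
    (fun τ hτ => hA _ (smul_I_add_smul_one_mem hτ hy))
    (fun τ hτ => hB _ (smul_I_add_smul_one_mem hτ hy))
  have h2 := fun x (hx : x ∈ uIcc x₁ x₂) => abs_edgeIntegral_sub_le (p := x • 1) (v := Complex.I)
    (L := L) (ε := ε) hy (by simp) (fun τ hτ => hα _ (smul_one_add_smul_I_mem hx hτ))
    (fun τ hτ => hβ _ (smul_one_add_smul_I_mem hx hτ))
    (fun τ hτ => hL _ (smul_one_add_smul_I_mem hx hτ)) A B α₀ β₀ hε
    (fun τ hτ => hA _ (smul_one_add_smul_I_mem hx hτ))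
    (fun τ hτ => hB _ (smul_one_add_smul_I_mem hx hτ))
  have a1 := abs_le.1 (h1 y₁ left_mem_uIcc)
  have a2 := abs_le.1 (h2 x₂ right_mem_uIcc)
  have a3 := abs_le.1 (h1 y₂ right_mem_uIcc)
  have a4 := abs_le.1 (h2 x₁ left_mem_uIcc)
  clear h1 h2
  have e : ∀ x y : ℝ, y • Complex.I + x • (1 : ℂ) = x • 1 + y • Complex.I :=
    fun x y => add_comm _ _
  simp only [e] at a1 a2 a3 a4
  set Λ : ℝ → ℝ → ℝ := fun x y => (α₀ + A (x • 1 + y • Complex.I))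
    (β (x • 1 + y • Complex.I) - (β₀ + B (x • 1 + y • Complex.I))) with hΛ
  have f : ∀ x y : ℝ, (α₀ + A (x • 1 + y • Complex.I))
    (β (x • 1 + y • Complex.I) - (β₀ + B (x • 1 + y • Complex.I))) = Λ x y := fun _ _ => rfl
  simp only [f] at a1 a2 a3 a4
  simp only [add_apply, map_smul, smul_apply, smul_eq_mul] at a1 a2 a3 a4
  rw [rectIntegral, abs_le]
  constructor <;> nlinarith

theorem edgeIntegral_add {p v : ℂ} {s t m L : ℝ} (hv : ‖v‖ ≤ 1) (hm : m ∈ uIcc s t)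
    (hα : ∀ τ ∈ uIcc s t, DifferentiableAt ℝ α (p + τ • v))
    (hβ : ∀ τ ∈ uIcc s t, DifferentiableAt ℝ β (p + τ • v))
    (hL : ∀ τ ∈ uIcc s t, ‖fderiv ℝ β (p + τ • v)‖ ≤ L) :
    edgeIntegral α β p v s t = edgeIntegral α β p v s m + edgeIntegral α β p v m t := by
  have h := edgeIntegral_intervalIntegrable hv hα hβ hL
  exact (intervalIntegral.integral_add_adjacent_intervals
    (h.mono_set (uIcc_subset_uIcc_left hm)) (h.mono_set (uIcc_subset_uIcc_right hm))).symm

theorem rectIntegral_split {x₁ x₂ y₁ y₂ x y L : ℝ} (hx : x ∈ uIcc x₁ x₂) (hy : y ∈ uIcc y₁ y₂)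
    (hα : ∀ z ∈ uIcc x₁ x₂ ×ℂ uIcc y₁ y₂, DifferentiableAt ℝ α z)
    (hβ : ∀ z ∈ uIcc x₁ x₂ ×ℂ uIcc y₁ y₂, DifferentiableAt ℝ β z)
    (hL : ∀ z ∈ uIcc x₁ x₂ ×ℂ uIcc y₁ y₂, ‖fderiv ℝ β z‖ ≤ L) :
    rectIntegral α β x₁ x₂ y₁ y₂ = rectIntegral α β x₁ x y₁ y + rectIntegral α β x x₂ y₁ y
      + rectIntegral α β x₁ x y y₂ + rectIntegral α β x x₂ y y₂ := by
  have h1 := fun y (hy : y ∈ uIcc y₁ y₂) => edgeIntegral_add (p := y • Complex.I) (v := 1)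
    (L := L) (by simp) hx (fun τ hτ => hα _ (smul_I_add_smul_one_mem hτ hy))
    (fun τ hτ => hβ _ (smul_I_add_smul_one_mem hτ hy))
    (fun τ hτ => hL _ (smul_I_add_smul_one_mem hτ hy))
  have h2 := fun x (hx : x ∈ uIcc x₁ x₂) => edgeIntegral_add (p := x • 1) (v := Complex.I)
    (L := L) (by simp) hy (fun τ hτ => hα _ (smul_one_add_smul_I_mem hx hτ))
    (fun τ hτ => hβ _ (smul_one_add_smul_I_mem hx hτ))
    (fun τ hτ => hL _ (smul_one_add_smul_I_mem hx hτ))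
  simp only [rectIntegral]
  rw [h1 y₁ left_mem_uIcc, h1 y₂ right_mem_uIcc, h2 x₁ left_mem_uIcc, h2 x₂ right_mem_uIcc]
  ring

theorem exists_nhds_neg_mul_le_rectIntegral {S : Set ℂ} {z₀ : ℂ} {L η k : ℝ} (hz₀ : z₀ ∈ S)
    (hα : ∀ z ∈ S, DifferentiableAt ℝ α z) (hβ : ∀ z ∈ S, DifferentiableAt ℝ β z)
    (hL : ∀ z ∈ S, ‖fderiv ℝ β z‖ ≤ L)
    (hκ : 0 ≤ fderiv ℝ α z₀ 1 (fderiv ℝ β z₀ Complex.I)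
      - fderiv ℝ α z₀ Complex.I (fderiv ℝ β z₀ 1)) (hη : 0 < η) (hk : 0 < k) :
    ∃ U ∈ 𝓝 z₀, ∀ x₁ x₂ y₁ y₂ : ℝ, x₁ ≤ x₂ → y₁ ≤ y₂ → z₀ ∈ uIcc x₁ x₂ ×ℂ uIcc y₁ y₂ →
      uIcc x₁ x₂ ×ℂ uIcc y₁ y₂ ⊆ U → uIcc x₁ x₂ ×ℂ uIcc y₁ y₂ ⊆ S →
      ((x₂ - x₁) + (y₂ - y₁)) ^ 2 ≤ k * ((x₂ - x₁) * (y₂ - y₁)) →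
      -(η * ((x₂ - x₁) * (y₂ - y₁))) ≤ rectIntegral α β x₁ x₂ y₁ y₂ := by
  set A := fderiv ℝ α z₀
  set B := fderiv ℝ β z₀
  have hL0 : 0 ≤ L := (norm_nonneg _).trans (hL z₀ hz₀)
  have hT0 : 0 < L + ‖A‖ + 1 := by positivity
  set T := L + ‖A‖ + 1 with hT
  set c : ℝ := η / (2 * T * k) with hc
  have hc0 : 0 < c := by positivity
  have n1 := (hα z₀ hz₀).hasFDerivAt.isLittleO.def hc0
  have n2 := (hβ z₀ hz₀).hasFDerivAt.isLittleO.def hc0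
  refine ⟨_, n1.and n2, fun x₁ x₂ y₁ y₂ hx hy hz hU hS hd => ?_⟩
  set d := (x₂ - x₁) + (y₂ - y₁)
  have hdist : ∀ w ∈ uIcc x₁ x₂ ×ℂ uIcc y₁ y₂, ‖w - z₀‖ ≤ d := by
    intro w hw
    rw [Complex.mem_reProdIm, uIcc_of_le hx, uIcc_of_le hy] at hw hz
    refine (Complex.norm_le_abs_re_add_abs_im _).trans (add_le_add ?_ ?_)
    · rw [Complex.sub_re, abs_le]
      constructor <;> linarith [hw.1.1, hw.1.2, hz.1.1, hz.1.2]
    · rw [Complex.sub_im, abs_le]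
      constructor <;> linarith [hw.2.1, hw.2.2, hz.2.1, hz.2.2]
  have hd0 : 0 ≤ d := (norm_nonneg _).trans (hdist _ hz)
  have est := abs_rectIntegral_sub_le hx hy
    (fun z hz => hα z (hS hz)) (fun z hz => hβ z (hS hz))
    (fun z hz => hL z (hS hz)) A B (α z₀ - A z₀) (β z₀ - B z₀) (ε := c * d)
    (by positivity)
    (fun w hw => by
      have e : α w - (α z₀ - A z₀ + A w) = α w - α z₀ - A (w - z₀) := by
        rw [map_sub]; abel
      rw [e]
      exact (hU hw).1.trans (by gcongr; exact hdist w hw))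
    (fun w hw => by
      have e : β w - (β z₀ - B z₀ + B w) = β w - β z₀ - B (w - z₀) := by
        rw [map_sub]; abel
      rw [e]
      exact (hU hw).2.trans (by gcongr; exact hdist w hw))
  have est1 := (abs_le.1 est).1
  have hpos : 0 ≤ (x₂ - x₁) * (y₂ - y₁) * (A 1 (B Complex.I) - A Complex.I (B 1)) :=
    mul_nonneg (mul_nonneg (sub_nonneg.2 hx) (sub_nonneg.2 hy)) hκ
  have hfin : 2 * (c * d) * (L + ‖A‖) * d ≤ η * ((x₂ - x₁) * (y₂ - y₁)) := by
    calc 2 * (c * d) * (L + ‖A‖) * d ≤ 2 * (c * d) * T * d := by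
          gcongr
          linarith
      _ = η / k * d ^ 2 := by
        rw [hc]
        field_simp
      _ ≤ η / k * (k * ((x₂ - x₁) * (y₂ - y₁))) := by gcongr
      _ = _ := by field_simp
  linarith

/-- A Goursat-type lemma: no continuity of the derivatives is needed. -/
theorem rectIntegral_nonneg {x₁ x₂ y₁ y₂ L : ℝ} (hx : x₁ < x₂) (hy : y₁ < y₂)
    (hα : ∀ z ∈ uIcc x₁ x₂ ×ℂ uIcc y₁ y₂, DifferentiableAt ℝ α z)
    (hβ : ∀ z ∈ uIcc x₁ x₂ ×ℂ uIcc y₁ y₂, DifferentiableAt ℝ β z)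
    (hL : ∀ z ∈ uIcc x₁ x₂ ×ℂ uIcc y₁ y₂, ‖fderiv ℝ β z‖ ≤ L)
    (hκ : ∀ z ∈ uIcc x₁ x₂ ×ℂ uIcc y₁ y₂, 0 ≤ fderiv ℝ α z 1 (fderiv ℝ β z Complex.I)
      - fderiv ℝ α z Complex.I (fderiv ℝ β z 1)) :
    0 ≤ rectIntegral α β x₁ x₂ y₁ y₂ := by
  suffices H : ∀ η > 0, -(η * ((x₂ - x₁) * (y₂ - y₁))) ≤ rectIntegral α β x₁ x₂ y₁ y₂ by
    have hA : 0 < (x₂ - x₁) * (y₂ - y₁) := mul_pos (sub_pos.2 hx) (sub_pos.2 hy)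
    refine le_of_forall_pos_sub_le fun ε hε => ?_
    have := H (ε / ((x₂ - x₁) * (y₂ - y₁))) (by positivity)
    rw [div_mul_cancel₀ _ hA.ne'] at this
    linarith
  intro η hη
  let Q : BoxIntegral.Box (Fin 2) := ⟨![x₁, y₁], ![x₂, y₂], by
    intro i; fin_cases i <;> simpa⟩
  suffices H : -(η * ((Q.upper 0 - Q.lower 0) * (Q.upper 1 - Q.lower 1)))
      ≤ rectIntegral α β (Q.lower 0) (Q.upper 0) (Q.lower 1) (Q.upper 1) from H
  have hsub : ∀ J ≤ Q, uIcc (J.lower 0) (J.upper 0) ×ℂ uIcc (J.lower 1) (J.upper 1) ⊆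
      uIcc x₁ x₂ ×ℂ uIcc y₁ y₂ := by
    intro J hJ z hz
    rw [Complex.mem_reProdIm, uIcc_of_le (J.lower_lt_upper 0).le,
      uIcc_of_le (J.lower_lt_upper 1).le] at hz
    rw [Complex.mem_reProdIm, uIcc_of_le hx.le, uIcc_of_le hy.le]
    have h := BoxIntegral.Box.le_iff_bounds.1 hJ
    have a0 := h.1 0
    have a1 := h.1 1
    have b0 := h.2 0
    have b1 := h.2 1
    simp only [Q, Matrix.cons_val_zero, Matrix.cons_val_one] at a0 a1 b0 b1
    exact ⟨⟨a0.trans hz.1.1, hz.1.2.trans b0⟩, ⟨a1.trans hz.2.1, hz.2.2.trans b1⟩⟩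
  refine BoxIntegral.Box.subbox_induction_on' (p := fun J =>
    -(η * ((J.upper 0 - J.lower 0) * (J.upper 1 - J.lower 1)))
      ≤ rectIntegral α β (J.lower 0) (J.upper 0) (J.lower 1) (J.upper 1)) Q ?_ ?_
  · intro J hJ h
    have mem : ∀ i, (J.lower i + J.upper i) / 2 ∈ uIcc (J.lower i) (J.upper i) := fun i => by
      have := J.lower_lt_upper i
      rw [uIcc_of_le this.le]
      constructor <;> linarith
    rw [rectIntegral_split (mem 0) (mem 1) (fun z hz => hα z (hsub J hJ hz))
      (fun z hz => hβ z (hsub J hJ hz)) (fun z hz => hL z (hsub J hJ hz))]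
    have s1 := h ∅
    have s2 := h {0}
    have s3 := h {1}
    have s4 := h univ
    simp [BoxIntegral.Box.splitCenterBox, Set.piecewise] at s1 s2 s3 s4
    linarith
  · intro z hz
    let ψ : (Fin 2 → ℝ) → ℂ := fun w => ⟨w 0, w 1⟩
    have hψ : Continuous ψ := by
      have : ψ = fun w => (w 0 : ℂ) + w 1 * Complex.I := funext fun w => Complex.mk_eq_add_mul_I _ _
      rw [this]
      fun_prop
    have hmem : ∀ J ≤ Q, ∀ w : Fin 2 → ℝ, w ∈ BoxIntegral.Box.Icc J →
        ψ w ∈ uIcc (J.lower 0) (J.upper 0) ×ℂ uIcc (J.lower 1) (J.upper 1) := by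
      intro J _ w hw
      rw [BoxIntegral.Box.Icc_eq_pi] at hw
      rw [Complex.mem_reProdIm, uIcc_of_le (J.lower_lt_upper 0).le,
        uIcc_of_le (J.lower_lt_upper 1).le]
      exact ⟨hw 0 trivial, hw 1 trivial⟩
    have hz0 := hsub Q le_rfl (hmem Q le_rfl z hz)
    have ha : 0 < x₂ - x₁ := sub_pos.2 hx
    have hb : 0 < y₂ - y₁ := sub_pos.2 hy
    obtain ⟨U, hU, H⟩ := exists_nhds_neg_mul_le_rectIntegral hz0 hα hβ hL (hκ _ hz0) hη
      (k := ((x₂ - x₁) + (y₂ - y₁)) ^ 2 / ((x₂ - x₁) * (y₂ - y₁))) (by positivity)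
    refine ⟨ψ ⁻¹' U, mem_nhdsWithin_of_mem_nhds (hψ.continuousAt.preimage_mem_nhds hU),
      fun J hJ m hzJ hJU hm => ?_⟩
    have m0 := hm 0
    have m1 := hm 1
    simp only [Q, Matrix.cons_val_zero, Matrix.cons_val_one] at m0 m1
    refine H _ _ _ _ (J.lower_lt_upper 0).le (J.lower_lt_upper 1).le (hmem J hJ z hzJ) ?_
      (hsub J hJ) ?_
    · intro w hw
      have : ![w.re, w.im] ∈ BoxIntegral.Box.Icc J := by
        rw [Complex.mem_reProdIm, uIcc_of_le (J.lower_lt_upper 0).le,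
          uIcc_of_le (J.lower_lt_upper 1).le] at hw
        rw [BoxIntegral.Box.Icc_eq_pi]
        intro i _
        fin_cases i
        exacts [hw.1, hw.2]
      exact hJU this
    · rw [m0, m1]
      apply le_of_eq
      field_simp

end Goursat

section SubMeanValue

variable {V : Type*} [NormedAddCommGroup V] [NormedSpace ℂ V]

/-- The differential of `h` intertwines multiplication by `i` and `J` at `ζ`. -/
def IsCRAt (J : V → V →L[ℝ] V) (h : ℂ → V) (ζ : ℂ) : Prop :=
  DifferentiableAt ℝ h ζ ∧ (fderiv ℝ h ζ).comp (Jst ℂ) = (J (h ζ)).comp (fderiv ℝ h ζ)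

variable {J : V → V →L[ℝ] V} {h : ℂ → V} {Ψ : V → ℝ}

theorem IsCRAt.fderiv_I_mul {ζ : ℂ} (hh : IsCRAt J h ζ) (v : ℂ) :
    fderiv ℝ h ζ (Complex.I * v) = J (h ζ) (fderiv ℝ h ζ v) := by
  have := DFunLike.congr_fun hh.2 v
  simpa [Jst] using this

theorem hasFDerivAt_comp_add_exp {c w : ℂ} (hh : DifferentiableAt ℝ h (c + Complex.exp w)) :
    HasFDerivAt (fun w => h (c + Complex.exp w))
      ((fderiv ℝ h (c + Complex.exp w)).comp (Complex.exp w • (1 : ℂ →L[ℝ] ℂ))) w :=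
  hh.hasFDerivAt.comp w ((Complex.hasDerivAt_exp w).const_add c).complexToReal_fderiv

theorem fderiv_comp_add_exp {c w : ℂ} (hh : DifferentiableAt ℝ h (c + Complex.exp w)) (v : ℂ) :
    fderiv ℝ (fun w => h (c + Complex.exp w)) w v
      = fderiv ℝ h (c + Complex.exp w) (Complex.exp w * v) := by
  rw [(hasFDerivAt_comp_add_exp hh).fderiv]
  simp

theorem add_exp_mem_ball {c w : ℂ} {R : ℝ} (hw : Real.exp w.re < R) :
    c + Complex.exp w ∈ ball c R := by
  simpa [Complex.norm_exp] using hw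

/-- The one-form `-J⋆dΨ`. -/
def negTwist (J : V → V →L[ℝ] V) (Ψ : V → ℝ) (y : V) : V →L[ℝ] ℝ := -(fderiv ℝ Ψ y).comp (J y)

theorem differentiableAt_twist {y : V} (hJ : DifferentiableAt ℝ J y) (hΨ : ContDiffAt ℝ 2 Ψ y) :
    DifferentiableAt ℝ (fun y => (fderiv ℝ Ψ y).comp (J y)) y := by
  have : DifferentiableAt ℝ (fderiv ℝ Ψ) y :=
    (hΨ.fderiv_right (m := 1) (by norm_num)).differentiableAt (by norm_num)
  exact this.clm_comp hJ

theorem fderiv_negTwist_sub_eq_leviForm (y X : V) :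
    fderiv ℝ (negTwist J Ψ) y X (J y X) - fderiv ℝ (negTwist J Ψ) y (J y X) X
      = leviForm J Ψ y X := by
  have : fderiv ℝ (negTwist J Ψ) y = -fderiv ℝ (fun y => (fderiv ℝ Ψ y).comp (J y)) y := by
    have e : negTwist J Ψ = -(fun y => (fderiv ℝ Ψ y).comp (J y)) := rfl
    rw [e, fderiv_neg]
  rw [this, leviForm]
  simp only [neg_apply]
  ring

variable [CompleteSpace V]

theorem rectIntegral_polar_nonneg {c : ℂ} {R L : ℝ}
    (hh : ∀ ζ ∈ ball c R, IsCRAt J h ζ) (hL : ∀ ζ ∈ ball c R, ‖fderiv ℝ h ζ‖ ≤ L)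
    (hJ : ∀ ζ ∈ ball c R, DifferentiableAt ℝ J (h ζ))
    (hΨ : ∀ ζ ∈ ball c R, ContDiffAt ℝ 2 Ψ (h ζ))
    (hlevi : ∀ ζ ∈ ball c R, ∀ X, 0 ≤ leviForm J Ψ (h ζ) X)
    {x₁ x₂ : ℝ} (hx : x₁ < x₂) (hx₂ : Real.exp x₂ < R) :
    0 ≤ rectIntegral (fun w => negTwist J Ψ (h (c + Complex.exp w)))
      (fun w => h (c + Complex.exp w)) x₁ x₂ 0 (2 * Real.pi) := by
  have hball : ∀ w ∈ uIcc x₁ x₂ ×ℂ uIcc 0 (2 * Real.pi), c + Complex.exp w ∈ ball c R := by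
    intro w hw
    rw [Complex.mem_reProdIm, uIcc_of_le hx.le] at hw
    exact add_exp_mem_ball ((Real.exp_le_exp.2 hw.1.2).trans_lt hx₂)
  have hα : ∀ w ∈ uIcc x₁ x₂ ×ℂ uIcc 0 (2 * Real.pi), HasFDerivAt
      (fun w => negTwist J Ψ (h (c + Complex.exp w)))
      ((fderiv ℝ (negTwist J Ψ) (h (c + Complex.exp w))).comp
        ((fderiv ℝ h (c + Complex.exp w)).comp (Complex.exp w • (1 : ℂ →L[ℝ] ℂ)))) w := by
    intro w hw
    have hb := hball w hw
    have h1 : DifferentiableAt ℝ (negTwist J Ψ) (h (c + Complex.exp w)) :=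
      (differentiableAt_twist (hJ _ hb) (hΨ _ hb)).neg
    exact h1.hasFDerivAt.comp w (hasFDerivAt_comp_add_exp (hh _ hb).1)
  refine rectIntegral_nonneg (L := L * R) hx (by positivity) (fun w hw => (hα w hw).differentiableAt)
    (fun w hw => (hasFDerivAt_comp_add_exp (hh _ (hball w hw)).1).differentiableAt)
    (fun w hw => ?_) (fun w hw => ?_)
  · have hb := hball w hw
    rw [(hasFDerivAt_comp_add_exp (hh _ hb).1).fderiv]
    refine (ContinuousLinearMap.opNorm_comp_le _ _).trans ?_
    gcongr
    · exact (norm_nonneg _).trans (hL _ hb)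
    · exact hL _ hb
    · rw [norm_smul]
      have h1 : ‖(1 : ℂ →L[ℝ] ℂ)‖ = 1 := norm_one
      rw [h1, mul_one]
      have hb' := (mem_ball.1 hb).le
      rwa [dist_eq_norm, add_sub_cancel_left] at hb'
  · have hb := hball w hw
    rw [(hα w hw).fderiv, fderiv_comp_add_exp (hh _ hb).1, fderiv_comp_add_exp (hh _ hb).1]
    have e : ∀ v, ((fderiv ℝ h (c + Complex.exp w)).comp (Complex.exp w • (1 : ℂ →L[ℝ] ℂ))) v
        = fderiv ℝ h (c + Complex.exp w) (Complex.exp w * v) := fun v => by simp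
    simp only [ContinuousLinearMap.comp_apply] at e ⊢
    rw [e, e, mul_one, mul_comm _ Complex.I, (hh _ hb).fderiv_I_mul,
      fderiv_negTwist_sub_eq_leviForm]
    exact hlevi _ hb _

theorem circleMap_eq_add_exp (c : ℂ) (x θ : ℝ) :
    circleMap c (Real.exp x) θ = c + Complex.exp (x • 1 + θ • Complex.I) := by
  simp [circleMap, Complex.exp_add]

/-- Sub-mean value property of `Ψ ∘ h` when `Ψ` has nonnegative Levi form. -/
theorem le_circleAverage_comp {c : ℂ} {R L : ℝ}
    (hh : ∀ ζ ∈ ball c R, IsCRAt J h ζ) (hL : ∀ ζ ∈ ball c R, ‖fderiv ℝ h ζ‖ ≤ L)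
    (hJ : ∀ ζ ∈ ball c R, DifferentiableAt ℝ J (h ζ))
    (hΨ : ∀ ζ ∈ ball c R, ContDiffAt ℝ 2 Ψ (h ζ))
    (hlevi : ∀ ζ ∈ ball c R, ∀ X, 0 ≤ leviForm J Ψ (h ζ) X)
    {ρ : ℝ} (hρ : 0 < ρ) (hρR : ρ < R) :
    Ψ (h c) ≤ Real.circleAverage (fun ζ => Ψ (h ζ)) c ρ := by
  have hcont : ContinuousOn (fun ζ => Ψ (h ζ)) (ball c R) := fun ζ hζ =>
    ((hΨ ζ hζ).continuousAt.comp (hh ζ hζ).1.continuousAt).continuousWithinAt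
  set H : ℂ → V := fun w => h (c + Complex.exp w) with hH
  set α : ℂ → V →L[ℝ] ℝ := fun w => negTwist J Ψ (H w) with hα
  set I : ℝ → ℝ := fun x => edgeIntegral α H (x • 1) Complex.I 0 (2 * Real.pi) with hI
  have hmem : ∀ {x : ℝ}, Real.exp x < R → ∀ θ : ℝ,
      c + Complex.exp (x • 1 + θ • Complex.I) ∈ ball c R := fun hx θ =>
    add_exp_mem_ball (by simpa using hx)
  have hInt : ∀ {x : ℝ}, Real.exp x < R → ∀ θ : ℝ, α (x • 1 + θ • Complex.I)
      (fderiv ℝ H (x • 1 + θ • Complex.I) Complex.I) =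
      fderiv ℝ Ψ (h (circleMap c (Real.exp x) θ)) (fderiv ℝ h (circleMap c (Real.exp x) θ)
        (Complex.exp (x • 1 + θ • Complex.I))) := by
    intro x hx θ
    have hb := hmem hx θ
    rw [circleMap_eq_add_exp, hH, fderiv_comp_add_exp (hh _ hb).1, mul_comm _ Complex.I,
      (hh _ hb).fderiv_I_mul]
    simp only [hα, hH, negTwist, neg_apply, ContinuousLinearMap.comp_apply]
    rw [← (hh _ hb).fderiv_I_mul, ← (hh _ hb).fderiv_I_mul, ← mul_assoc, Complex.I_mul_I]
    simp
  -- a bound for the radial derivative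
  have hbound : ∃ C, 0 ≤ C ∧ ∀ x : ℝ, x ≤ Real.log ((ρ + R) / 2) → ∀ θ : ℝ,
      ‖α (x • 1 + θ • Complex.I) (fderiv ℝ H (x • 1 + θ • Complex.I) Complex.I)‖
        ≤ C * Real.exp x := by
    have hc' : ContinuousOn (fun ζ => fderiv ℝ Ψ (h ζ)) (closedBall c ((ρ + R) / 2)) :=
      fun ζ hζ => by
        have hb : ζ ∈ ball c R := closedBall_subset_ball (by linarith) hζ
        exact (((hΨ ζ hb).fderiv_right (m := 1) (by norm_num)).continuousAt.comp
          (hh ζ hb).1.continuousAt).continuousWithinAt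
    obtain ⟨C, hC⟩ := (isCompact_closedBall c ((ρ + R) / 2)).exists_bound_of_continuousOn hc'
    have hC0 : 0 ≤ C := (norm_nonneg _).trans (hC c (mem_closedBall_self (by linarith)))
    have hL0 : 0 ≤ L := (norm_nonneg _).trans (hL c (mem_ball_self (by linarith)))
    refine ⟨C * L, by positivity, fun x hx θ => ?_⟩
    have hx' : Real.exp x ≤ (ρ + R) / 2 := (Real.le_log_iff_exp_le (by linarith)).1 hx
    have hxR : Real.exp x < R := by linarith
    rw [hInt hxR θ]
    have hb : circleMap c (Real.exp x) θ ∈ ball c R := by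
      rw [circleMap_eq_add_exp]; exact hmem hxR θ
    have hcb : circleMap c (Real.exp x) θ ∈ closedBall c ((ρ + R) / 2) := by
      simpa [circleMap, abs_of_pos (Real.exp_pos x)] using hx'
    refine (ContinuousLinearMap.le_of_opNorm_le_of_le _ (hC _ hcb)
      (ContinuousLinearMap.le_of_opNorm_le_of_le _ (hL _ hb) (b := Real.exp x) ?_)).trans
      (by rw [mul_assoc])
    simp [Complex.norm_exp]
  obtain ⟨C, hC0, hC⟩ := hbound
  have hlogR : Real.log ρ < Real.log ((ρ + R) / 2) := Real.log_lt_log hρ (by linarith)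
  have hexp : ∀ x, x ≤ Real.log ((ρ + R) / 2) → Real.exp x < R := fun x hx => by
    have := (Real.le_log_iff_exp_le (by linarith)).1 hx
    linarith
  -- the radial derivative of the circle averages is monotone
  have hmono : ∀ x₁ x₂, x₁ < x₂ → x₂ ≤ Real.log ((ρ + R) / 2) → I x₁ ≤ I x₂ := by
    intro x₁ x₂ hx hx₂
    have key := rectIntegral_polar_nonneg hh hL hJ hΨ hlevi hx (hexp _ hx₂)
    have hper : edgeIntegral α H ((2 * Real.pi) • Complex.I) 1 x₁ x₂
        = edgeIntegral α H ((0 : ℝ) • Complex.I) 1 x₁ x₂ := by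
      have e : ∀ τ : ℝ, ((2 * Real.pi) • Complex.I + τ • (1 : ℂ))
          = ((0 : ℝ) • Complex.I + τ • (1 : ℂ)) + 2 * Real.pi * Complex.I := fun τ => by
        simp; ring
      have eH : ∀ w, H (w + 2 * Real.pi * Complex.I) = H w := fun w => by
        simp only [hH, Complex.exp_periodic w]
      have eH' : ∀ w, fderiv ℝ H (w + 2 * Real.pi * Complex.I) = fderiv ℝ H w := fun w => by
        rw [← fderiv_comp_add_right]
        simp only [eH]
      unfold edgeIntegral
      simp only [e, eH', hα, eH]
    rw [rectIntegral] at key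
    change 0 ≤ edgeIntegral α H ((0 : ℝ) • Complex.I) 1 x₁ x₂ + I x₂
      - edgeIntegral α H ((2 * Real.pi) • Complex.I) 1 x₁ x₂ - I x₁ at key
    rw [hper] at key
    linarith
  have hIbd : ∀ x, x ≤ Real.log ((ρ + R) / 2) → |I x| ≤ C * Real.exp x * (2 * Real.pi) := by
    intro x hx
    have := intervalIntegral.norm_integral_le_of_norm_le_const (a := 0) (b := 2 * Real.pi)
      (fun θ _ => hC x hx θ)
    rwa [sub_zero, abs_of_pos Real.two_pi_pos] at this
  have hI0 : ∀ x, x ≤ Real.log ((ρ + R) / 2) → 0 ≤ I x := by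
    intro x hx
    have hlim : Tendsto (fun y : ℝ => -(C * Real.exp y * (2 * Real.pi))) atBot (𝓝 0) := by
      have := ((Real.tendsto_exp_atBot.const_mul C).mul_const (2 * Real.pi)).neg
      simpa using this
    refine le_of_tendsto (b := I x) (f := fun y : ℝ => -(C * Real.exp y * (2 * Real.pi))) hlim ?_
    filter_upwards [eventually_lt_atBot x] with y hy
    exact (neg_le_of_abs_le (hIbd y (hy.le.trans hx))).trans (hmono y x hy hx)
  set M : ℝ → ℝ := fun x => ∫ θ in (0 : ℝ)..2 * Real.pi, Ψ (h (circleMap c (Real.exp x) θ)) with hM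
  have hMcont : ∀ x : ℝ, Real.exp x < R →
      Continuous fun θ => Ψ (h (circleMap c (Real.exp x) θ)) := fun x hx =>
    hcont.comp_continuous (continuous_circleMap c _) fun θ => by
      rw [circleMap_eq_add_exp]; exact hmem hx θ
  have hMderiv : ∀ x, x < Real.log ((ρ + R) / 2) → HasDerivAt M (I x) x := by
    intro x hx
    refine (intervalIntegral.hasDerivAt_integral_of_dominated_loc_of_deriv_le
      (F := fun x θ => Ψ (h (circleMap c (Real.exp x) θ)))
      (F' := fun x θ => α (x • 1 + θ • Complex.I) (fderiv ℝ H (x • 1 + θ • Complex.I) Complex.I))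
      (bound := fun _ => C * ((ρ + R) / 2)) (Iio_mem_nhds hx) ?_ ?_ ?_ ?_ ?_ ?_).2
    · filter_upwards [Iio_mem_nhds hx] with y hy
      exact (hMcont y (hexp y (le_of_lt hy))).aestronglyMeasurable
    · exact (hMcont x (hexp x hx.le)).intervalIntegrable _ _
    · have hb : ∀ θ : ℝ, _ := fun θ => hmem (hexp x hx.le) θ
      refine (edgeIntegral_intervalIntegrable (L := L * Real.exp x) (by simp) (fun θ _ => ?_)
        (fun θ _ => ?_) fun θ _ => ?_).aestronglyMeasurable_restrict_uIoc
      · have h1 : DifferentiableAt ℝ (negTwist J Ψ) (H (x • 1 + θ • Complex.I)) :=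
          (differentiableAt_twist (hJ _ (hb θ)) (hΨ _ (hb θ))).neg
        exact (h1.hasFDerivAt.comp _ (hasFDerivAt_comp_add_exp (hh _ (hb θ)).1)).differentiableAt
      · exact (hasFDerivAt_comp_add_exp (hh _ (hb θ)).1).differentiableAt
      · rw [(hasFDerivAt_comp_add_exp (hh _ (hb θ)).1).fderiv]
        refine (ContinuousLinearMap.opNorm_comp_le _ _).trans ?_
        have h1 : ‖(1 : ℂ →L[ℝ] ℂ)‖ = 1 := norm_one
        rw [norm_smul, h1, mul_one]
        refine mul_le_mul (hL _ (hb θ)) ?_ (norm_nonneg _) ((norm_nonneg _).trans (hL _ (hb θ)))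
        simp [Complex.norm_exp]
    · refine Filter.Eventually.of_forall fun θ _ y hy => (hC y (le_of_lt hy) θ).trans ?_
      gcongr
      exact (Real.le_log_iff_exp_le (by linarith)).1 (le_of_lt hy)
    · exact intervalIntegrable_const
    · refine Filter.Eventually.of_forall fun θ _ y hy => ?_
      have hb := hmem (hexp y (le_of_lt hy)) θ
      have h1 : HasDerivAt (fun y : ℝ => H (y • 1 + θ • Complex.I))
          (fderiv ℝ H (y • 1 + θ • Complex.I) 1) y := by
        have h0 : HasDerivAt (fun y : ℝ => y • (1 : ℂ) + θ • Complex.I) 1 y := by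
          simpa using ((hasDerivAt_id' y).smul_const (1 : ℂ)).add_const (θ • Complex.I)
        have h3 : HasFDerivAt H (fderiv ℝ H (y • 1 + θ • Complex.I)) (y • 1 + θ • Complex.I) :=
          (hasFDerivAt_comp_add_exp (hh _ hb).1).differentiableAt.hasFDerivAt
        have h4 := h3.comp_hasDerivAt y h0
        exact h4
      have h2 := ((hΨ _ hb).differentiableAt (by norm_num)).hasFDerivAt.comp_hasDerivAt y h1
      rw [hInt (hexp y (le_of_lt hy)) θ]
      simp only [circleMap_eq_add_exp]
      rw [hH, fderiv_comp_add_exp (hh _ hb).1, mul_one] at h2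
      exact h2
  have hMmono : MonotoneOn M (Iio (Real.log ((ρ + R) / 2))) := by
    refine monotoneOn_of_deriv_nonneg (convex_Iio _)
      (fun x hx => (hMderiv x hx).continuousAt.continuousWithinAt)
      (fun x hx => (hMderiv x (by rwa [interior_Iio] at hx)).differentiableAt.differentiableWithinAt)
      fun x hx => ?_
    rw [interior_Iio] at hx
    rw [(hMderiv x hx).deriv]
    exact hI0 x (le_of_lt hx)
  have hMρ : Real.circleAverage (fun ζ => Ψ (h ζ)) c ρ = (2 * Real.pi)⁻¹ * M (Real.log ρ) := by
    simp [Real.circleAverage, hM, Real.exp_log hρ]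
  rw [hMρ]
  refine le_of_forall_pos_le_add fun ε hε => ?_
  obtain ⟨δ, hδ, hδε⟩ := Metric.continuousAt_iff.1
    (hcont.continuousAt (ball_mem_nhds c (hρ.trans hρR))) ε hε
  set x := min (Real.log ρ) (Real.log (δ / 2)) with hx
  have hxδ : Real.exp x < δ := by
    have := Real.exp_le_exp.2 (min_le_right (Real.log ρ) (Real.log (δ / 2)))
    rw [Real.exp_log (by positivity)] at this
    linarith
  have hxρ : x < Real.log ((ρ + R) / 2) := (min_le_left _ _).trans_lt hlogR
  have h1 : M x ≤ M (Real.log ρ) := hMmono hxρ hlogR (min_le_left _ _)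
  have h2 : 2 * Real.pi * (Ψ (h c) - ε) ≤ M x := by
    have h3 := intervalIntegral.integral_mono_on (a := 0) (b := 2 * Real.pi)
      (f := fun _ => Ψ (h c) - ε) (μ := MeasureTheory.volume) Real.two_pi_pos.le intervalIntegrable_const
      ((hMcont x (hexp x hxρ.le)).intervalIntegrable _ _) fun θ _ => by
        have h4 : dist (circleMap c (Real.exp x) θ) c < δ := by
          simpa [circleMap, dist_eq_norm, abs_of_pos (Real.exp_pos x)] using hxδ
        have h5 := hδε h4
        rw [Real.dist_eq, abs_lt] at h5
        linarith
    rwa [intervalIntegral.integral_const, sub_zero, smul_eq_mul] at h3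
  have h3 := h2.trans h1
  have h4 : Ψ (h c) - ε ≤ (2 * Real.pi)⁻¹ * M (Real.log ρ) := by
    rw [inv_mul_eq_div, le_div_iff₀ Real.two_pi_pos]
    linarith
  linarith

end SubMeanValue

section MaximumPrinciple

/-- `u` is continuous near `c` and satisfies the sub-mean value inequality at `c`. -/
def IsSubMeanAt (u : ℂ → ℝ) (c : ℂ) : Prop :=
  ∃ R > 0, ContinuousOn u (ball c R) ∧
    ∀ ρ, 0 < ρ → ρ < R → u c ≤ Real.circleAverage u c ρ

theorem IsSubMeanAt.eventually_eq_of_isLocalMax {u : ℂ → ℝ} {c : ℂ} (hu : IsSubMeanAt u c)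
    (hmax : IsLocalMax u c) : ∀ᶠ z in 𝓝 c, u z = u c := by
  obtain ⟨R, hR, hcont, hmean⟩ := hu
  obtain ⟨R₁, hR₁, hle⟩ := Metric.eventually_nhds_iff_ball.1 hmax
  filter_upwards [ball_mem_nhds c (lt_min hR hR₁)] with z hz
  by_contra hne
  have hzc : z ≠ c := fun h => hne (by rw [h])
  have hρ : 0 < dist z c := dist_pos.2 hzc
  have hρR : dist z c < R := (mem_ball.1 hz).trans_le (min_le_left _ _)
  have hρR₁ : dist z c < R₁ := (mem_ball.1 hz).trans_le (min_le_right _ _)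
  have hz' : u z < u c := lt_of_le_of_ne (hle z hρR₁) hne
  have hmem : ∀ θ, dist (circleMap c (dist z c) θ) c = dist z c := fun θ => by
    rw [dist_eq_norm, circleMap_sub_center, norm_circleMap_zero, abs_of_pos hρ]
  have hz2 : z ∈ circleMap c (dist z c) '' Ioc 0 (2 * Real.pi) := by
    rw [image_circleMap_Ioc, mem_sphere, abs_of_pos hρ]
  obtain ⟨θ, hθ, hθz⟩ := hz2
  have hcirc : Continuous fun θ => u (circleMap c (dist z c) θ) :=
    hcont.comp_continuous (continuous_circleMap c _) fun θ => by
      rw [mem_ball, hmem]; exact hρR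
  have h1 := intervalIntegral.integral_lt_integral_of_continuousOn_of_le_of_exists_lt
    Real.two_pi_pos hcirc.continuousOn (continuousOn_const (c := u c))
    (fun θ _ => hle _ (by rw [mem_ball, hmem]; exact hρR₁))
    ⟨θ, Ioc_subset_Icc_self hθ, by rw [hθz]; exact hz'⟩
  rw [intervalIntegral.integral_const, sub_zero, smul_eq_mul] at h1
  have h2 := hmean _ hρ hρR
  rw [Real.circleAverage, smul_eq_mul, inv_mul_eq_div, le_div_iff₀ Real.two_pi_pos] at h2
  linarith

theorem IsSubMeanAt.add {u q : ℂ → ℝ} {c : ℂ} (hu : IsSubMeanAt u c) (hq : IsSubMeanAt q c) :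
    IsSubMeanAt (fun z => u z + q z) c := by
  obtain ⟨R, hR, hcont, hmean⟩ := hu
  obtain ⟨R₁, hR₁, hcont₁, hmean₁⟩ := hq
  refine ⟨min R R₁, lt_min hR hR₁, (hcont.mono (ball_subset_ball (min_le_left _ _))).add
    (hcont₁.mono (ball_subset_ball (min_le_right _ _))), fun ρ hρ hρR => ?_⟩
  obtain ⟨h1, h2⟩ := lt_min_iff.1 hρR
  have hs : ∀ {R' : ℝ}, ρ < R' → sphere c |ρ| ⊆ ball c R' := fun h => by
    rw [abs_of_pos hρ]; exact sphere_subset_closedBall.trans (closedBall_subset_ball h)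
  have := Real.circleAverage_add (hcont.mono (hs h1)).circleIntegrable'
    (hcont₁.mono (hs h2)).circleIntegrable'
  have e : Real.circleAverage (fun z => u z + q z) c ρ = Real.circleAverage (u + q) c ρ := rfl
  rw [e, this]
  exact add_le_add (hmean ρ hρ h1) (hmean₁ ρ hρ h2)

theorem isSubMeanAt_of_harmonicAt {q : ℂ → ℝ} {c : ℂ}
    (hq : InnerProductSpace.HarmonicAt q c) : IsSubMeanAt q c := by
  obtain ⟨R, hR, hball⟩ := Metric.eventually_nhds_iff_ball.1 hq.eventually
  refine ⟨R, hR, fun z hz => (hball z hz).1.continuousAt.continuousWithinAt, fun ρ hρ hρR => ?_⟩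
  refine (InnerProductSpace.HarmonicOnNhd.circleAverage_eq fun z hz => hball z ?_).ge
  rw [abs_of_pos hρ] at hz
  exact closedBall_subset_ball hρR hz

theorem isSubMeanAt_const_mul_log_norm_sub (k : ℝ) {a c : ℂ} (hc : c ≠ a) :
    IsSubMeanAt (fun z => k * Real.log ‖z - a‖) c := by
  have h1 : AnalyticAt ℂ (fun z : ℂ => z - a) c := by fun_prop
  exact isSubMeanAt_of_harmonicAt ((h1.harmonicAt_log_norm (sub_ne_zero.2 hc)).const_smul (c := k))

/-- Maximum principle for functions which are constant near each local maximum outside `S`. -/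
theorem le_of_forall_isLocalMax_eventually_eq {K S : Set ℂ} {u : ℂ → ℝ} {m : ℝ}
    (hK : IsCompact K) (hu : ContinuousOn u K)
    (hloc : ∀ ζ ∈ K, ζ ∉ S → K ∈ 𝓝 ζ ∧ (IsLocalMax u ζ → ∀ᶠ z in 𝓝 ζ, u z = u ζ))
    (hS : ∀ ζ ∈ K, ζ ∈ S → u ζ ≤ m) {ζ : ℂ} (hζ : ζ ∈ K) : u ζ ≤ m := by
  obtain ⟨z₀, hz₀, hmax₀⟩ := hK.exists_isMaxOn ⟨ζ, hζ⟩ hu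
  have hA : IsCompact (K ∩ u ⁻¹' {u z₀}) := by
    exact hK.of_isClosed_subset (hu.preimage_isClosed_of_isClosed hK.isClosed isClosed_singleton)
      inter_subset_left
  obtain ⟨z, ⟨hzK, hzu⟩, hzmax⟩ := hA.exists_isMaxOn ⟨z₀, hz₀, rfl⟩
    Complex.continuous_re.continuousOn
  have hzu : u z = u z₀ := hzu
  have hle : ∀ w ∈ K, u w ≤ u z := fun w hw => hzu ▸ hmax₀ hw
  by_cases hzS : z ∈ S
  · exact (hle ζ hζ).trans (hS z hzK hzS)
  obtain ⟨hKn, hc⟩ := hloc z hzK hzS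
  have hconst := hc (by filter_upwards [hKn] with w hw using hle w hw)
  obtain ⟨δ, hδ, hball⟩ := Metric.eventually_nhds_iff_ball.1 (hconst.and hKn)
  have hw := hball (z + (δ / 2 : ℝ)) (by simp [abs_of_pos hδ]; linarith)
  have h2 : (z + (δ / 2 : ℝ)).re ≤ z.re := hzmax ⟨hw.2, hw.1.trans hzu⟩
  simp at h2
  linarith

variable {V : Type*} [NormedAddCommGroup V] [NormedSpace ℂ V] [CompleteSpace V]

theorem isSubMeanAt_comp {J : V → V →L[ℝ] V} {h : ℂ → V} {Ψ : V → ℝ} {c : ℂ} {L : ℝ}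
    (hh : ∀ᶠ ζ in 𝓝 c, IsCRAt J h ζ) (hL : ∀ᶠ ζ in 𝓝 c, ‖fderiv ℝ h ζ‖ ≤ L)
    (hJ : ∀ᶠ ζ in 𝓝 c, DifferentiableAt ℝ J (h ζ))
    (hΨ : ∀ᶠ ζ in 𝓝 c, ContDiffAt ℝ 2 Ψ (h ζ))
    (hlevi : ∀ᶠ ζ in 𝓝 c, ∀ X, 0 ≤ leviForm J Ψ (h ζ) X) :
    IsSubMeanAt (fun ζ => Ψ (h ζ)) c := by
  obtain ⟨R, hR, hb⟩ := Metric.eventually_nhds_iff_ball.1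
    (hh.and (hL.and (hJ.and (hΨ.and hlevi))))
  refine ⟨R, hR, fun ζ hζ => ((hb ζ hζ).2.2.2.1.continuousAt.comp
    (hb ζ hζ).1.1.continuousAt).continuousWithinAt, fun ρ hρ hρR => ?_⟩
  exact le_circleAverage_comp (fun ζ hζ => (hb ζ hζ).1) (fun ζ hζ => (hb ζ hζ).2.1)
    (fun ζ hζ => (hb ζ hζ).2.2.1) (fun ζ hζ => (hb ζ hζ).2.2.2.1)
    (fun ζ hζ => (hb ζ hζ).2.2.2.2) hρ hρR

end MaximumPrinciple

section LeviForm

variable {V : Type*} [NormedAddCommGroup V] [NormedSpace ℂ V]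

theorem leviForm_add_const_mul {J : V → V →L[ℝ] V} {Ψ φ : V → ℝ} {y : V} (b : ℝ)
    (hJ : DifferentiableAt ℝ J y) (hΨ : ContDiffAt ℝ 2 Ψ y) (hφ : ContDiffAt ℝ 2 φ y) (X : V) :
    leviForm J (fun y => Ψ y + b * φ y) y X = leviForm J Ψ y X + b * leviForm J φ y X := by
  have h1 : ∀ᶠ z in 𝓝 y, (fderiv ℝ (fun y => Ψ y + b * φ y) z).comp (J z)
      = (fderiv ℝ Ψ z).comp (J z) + b • (fderiv ℝ φ z).comp (J z) := by
    filter_upwards [hΨ.eventually (by simp), hφ.eventually (by simp)] with z h1 h2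
    have h1 := h1.differentiableAt (by norm_num)
    have h2 := h2.differentiableAt (by norm_num)
    rw [(h1.hasFDerivAt.fun_add (h2.hasFDerivAt.const_mul b)).fderiv, ContinuousLinearMap.add_comp,
      ContinuousLinearMap.smul_comp]
  have h2 := (differentiableAt_twist hJ hΨ).hasFDerivAt.add
    ((differentiableAt_twist hJ hφ).hasFDerivAt.const_smul b)
  have h3 := (h2.congr_of_eventuallyEq (h1 : _ =ᶠ[𝓝 y] _)).fderiv
  rw [leviForm, h3, leviForm, leviForm]
  simp only [add_apply, smul_apply, smul_eq_mul]
  ring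

theorem leviForm_eq_of_fderiv_eq {J : V → V →L[ℝ] V} {Ψ k : V → ℝ} {G : V →L[ℝ] V →L[ℝ] ℝ}
    {q y : V} {Dk : V →L[ℝ] ℝ} (hΨ : ∀ᶠ z in 𝓝 y, fderiv ℝ Ψ z = k z • G (z - q))
    (hk : HasFDerivAt k Dk y) (hJ : DifferentiableAt ℝ J y)
    (hsq : (J y).comp (J y) = -ContinuousLinearMap.id ℝ V) (X : V) :
    leviForm J Ψ y X = Dk X * G (y - q) X + Dk (J y X) * G (y - q) (J y X)
      + k y * (G X X + G (J y X) (J y X)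
        - G (y - q) (fderiv ℝ J y X (J y X) - fderiv ℝ J y (J y X) X)) := by
  have hsq' : ∀ x, J y (J y x) = -x := fun x => by
    simpa using DFunLike.congr_fun hsq x
  have h1 : HasFDerivAt (fun z => G (z - q)) G y := by
    exact (G.hasFDerivAt.comp y ((hasFDerivAt_id y).sub_const q)).congr_fderiv G.comp_id
  have h2 := (hk.smul h1).clm_comp hJ.hasFDerivAt
  have h3 := h2.congr_of_eventuallyEq (hΨ.mono fun z hz => by
    show (fderiv ℝ Ψ z).comp (J z) = _
    rw [hz]; rfl)
  rw [leviForm, h3.fderiv]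
  simp [hsq']
  ring

end LeviForm

section HermitianForm

variable {V : Type*} [NormedAddCommGroup V] [NormedSpace ℝ V]

theorem sq_apply_le_mul_of_symm {G : V →L[ℝ] V →L[ℝ] ℝ} (hsymm : ∀ x y, G x y = G y x)
    (hpos : ∀ x, ‖x‖ ^ 2 ≤ G x x) (x y : V) : G x y ^ 2 ≤ G x x * G y y := by
  have h := (sq_nonneg _).trans (hpos (G y y • x - G x y • y))
  simp only [map_sub, map_smul, sub_apply, smul_apply, smul_eq_mul, hsymm y x] at h
  rcases (((sq_nonneg _).trans (hpos y))).eq_or_lt with h0 | h0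
  · have hy : y = 0 := by
      have := hpos y
      rw [← h0] at this
      simpa using this
    simp [hy]
  · have : 0 ≤ G y y * (G x x * G y y - G x y ^ 2) := by linarith
    linarith [nonneg_of_mul_nonneg_right this h0]

theorem sq_add_sq_apply_le {G : V →L[ℝ] V →L[ℝ] ℝ} (hsymm : ∀ x y, G x y = G y x)
    (hpos : ∀ x, ‖x‖ ^ 2 ≤ G x x) {J₀ : V →L[ℝ] V} (hJ₀ : ∀ x, J₀ (J₀ x) = -x)
    (hG : ∀ x y, G (J₀ x) (J₀ y) = G x y) (y X : V) :
    G y X ^ 2 + G y (J₀ X) ^ 2 ≤ G y y * G X X := by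
  have h := (sq_nonneg _).trans (hpos (G X X • y - G y X • X - G y (J₀ X) • J₀ X))
  have h1 : G X (J₀ X) = 0 := by
    have := hG X (J₀ X)
    rw [hJ₀, map_neg, hsymm] at this
    linarith
  have h2 : G (J₀ X) X = 0 := by rw [hsymm, h1]
  simp only [map_sub, map_smul, sub_apply, smul_apply, smul_eq_mul, hsymm X y, hsymm (J₀ X) y,
    hG, h1, h2] at h
  rcases (((sq_nonneg _).trans (hpos X))).eq_or_lt with h0 | h0
  · have hX : X = 0 := by
      have := hpos X
      rw [← h0] at this
      simpa using this
    simp [hX]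
  · have : 0 ≤ G X X * (G y y * G X X - (G y X ^ 2 + G y (J₀ X) ^ 2)) := by linarith
    linarith [nonneg_of_mul_nonneg_right this h0]

/-- Estimates for a `J₀`-hermitian form `G` and an endomorphism `J₁` close to `J₀`. -/
theorem hermitian_perturbation_bounds {G : V →L[ℝ] V →L[ℝ] ℝ} (hsymm : ∀ x y, G x y = G y x)
    (hpos : ∀ x, ‖x‖ ^ 2 ≤ G x x) {C S : ℝ} (hC : 0 ≤ C) (hle : ∀ x, G x x ≤ C ^ 2 * ‖x‖ ^ 2)
    {J₀ J₁ : V →L[ℝ] V} (hJ₀ : ∀ x, J₀ (J₀ x) = -x) (hG : ∀ x y, G (J₀ x) (J₀ y) = G x y)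
    {y : V} {s : ℝ} (hs : 0 ≤ s) (hsS : s ≤ S) (hys : G y y = s ^ 2)
    (hJ₁ : ‖J₁ - J₀‖ ≤ C * ‖y‖) {X W : V} (hW : ‖W‖ ≤ 2 * C ^ 2 * ‖X‖ ^ 2) :
    G y X ^ 2 + G y (J₁ X) ^ 2 ≤ s ^ 2 * (1 + (2 * C ^ 2 + 2 * C ^ 3 + C ^ 4 * S) * s) * G X X ∧
    (2 - (2 * C ^ 2 + 2 * C ^ 3 + C ^ 4 * S) * s) * G X X ≤ G X X + G (J₁ X) (J₁ X) - G y W := by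
  have hS : 0 ≤ S := hs.trans hsS
  set n := G X X with hn
  have hn0 : 0 ≤ n := (sq_nonneg _).trans (hpos X)
  have hys' : ‖y‖ ≤ s := abs_le_of_sq_le_sq' ((hpos y).trans hys.le) hs |>.2
  have cs := sq_apply_le_mul_of_symm hsymm hpos
  set e := J₁ X - J₀ X with he
  have he1 : ‖e‖ ≤ C * s * ‖X‖ := by
    calc ‖e‖ = ‖(J₁ - J₀) X‖ := by simp [he]
      _ ≤ C * ‖y‖ * ‖X‖ := ContinuousLinearMap.le_of_opNorm_le _ hJ₁ X
      _ ≤ _ := by gcongr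
  have he2 : G e e ≤ (C ^ 2 * s) ^ 2 * n := by
    calc G e e ≤ C ^ 2 * ‖e‖ ^ 2 := hle e
      _ ≤ C ^ 2 * (C * s * ‖X‖) ^ 2 := by gcongr
      _ = (C ^ 2 * s) ^ 2 * ‖X‖ ^ 2 := by ring
      _ ≤ _ := by gcongr; exact hpos X
  set σ := C ^ 2 * s with hσ
  have hσ0 : 0 ≤ σ := by positivity
  have hJX : J₁ X = J₀ X + e := by simp [he]
  have hnJ : G (J₀ X) (J₀ X) = n := hG X X
  have h1 : |G (J₀ X) e| ≤ σ * n := by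
    refine abs_le_of_sq_le_sq ?_ (by positivity)
    calc _ ≤ G (J₀ X) (J₀ X) * G e e := cs _ _
      _ ≤ n * (σ ^ 2 * n) := by rw [hnJ]; gcongr
      _ = _ := by ring
  have h2 : |G y W| ≤ 2 * C ^ 3 * s * n := by
    refine abs_le_of_sq_le_sq ?_ (by positivity)
    calc _ ≤ G y y * G W W := cs _ _
      _ ≤ s ^ 2 * (C ^ 2 * (2 * C ^ 2 * ‖X‖ ^ 2) ^ 2) := by
        rw [hys]; gcongr; exact (hle W).trans (by gcongr)
      _ = (2 * C ^ 3 * s * ‖X‖ ^ 2) ^ 2 := by ring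
      _ ≤ _ := by gcongr; exact hpos X
  have h3 := sq_add_sq_apply_le hsymm hpos hJ₀ hG y X
  rw [hys] at h3
  have h4 : G y e ^ 2 ≤ s ^ 2 * (σ ^ 2 * n) := by
    refine (cs y e).trans ?_
    rw [hys]; gcongr
  have h5 : G y (J₀ X) * G y e ≤ s ^ 2 * σ * n := by
    refine abs_le_of_sq_le_sq' ?_ (by positivity) |>.2
    calc _ = G y (J₀ X) ^ 2 * G y e ^ 2 := by ring
      _ ≤ (s ^ 2 * n) * (s ^ 2 * (σ ^ 2 * n)) := by
        gcongr
        linarith [sq_nonneg (G y X)]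
      _ = _ := by ring
  constructor
  · rw [hJX, map_add]
    have h6 : s ^ 2 * (σ ^ 2 * n) ≤ s ^ 2 * (C ^ 4 * S * s) * n := by
      have : σ ^ 2 = C ^ 4 * s * s := by rw [hσ]; ring
      rw [this, ← mul_assoc]
      gcongr
    have h7 : 0 ≤ s ^ 2 * (2 * C ^ 3 * s) * n := by positivity
    have h8 : (G y (J₀ X) + G y e) ^ 2
        = G y (J₀ X) ^ 2 + 2 * (G y (J₀ X) * G y e) + G y e ^ 2 := by ring
    rw [h8]
    rw [hσ] at h5
    nlinarith
  · have h6 : G (J₁ X) (J₁ X) = n + 2 * G (J₀ X) e + G e e := by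
      rw [hJX]
      simp only [map_add, add_apply, hnJ, hsymm e (J₀ X)]
      ring
    have h7 : 0 ≤ G e e := (sq_nonneg _).trans (hpos e)
    have h8 : 0 ≤ C ^ 4 * S * s * n := by positivity
    have h9 := (abs_le.1 h1).1
    have h10 := (abs_le.1 h2).2
    rw [h6]
    rw [hσ] at h9
    nlinarith

end HermitianForm

section PoleFunction

variable {V : Type*} [NormedAddCommGroup V]

section Real

variable [NormedSpace ℝ V]

/-- A function with a logarithmic pole at `q`, adapted to the quadratic form `G`. -/
def poleFun (G : V →L[ℝ] V →L[ℝ] ℝ) (q : V) (A : ℝ) (y : V) : ℝ :=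
  Real.log (G (y - q) (y - q)) + A * √(G (y - q) (y - q))

variable {G : V →L[ℝ] V →L[ℝ] ℝ} {q y : V}

theorem contDiffAt_poleFun (A : ℝ) (hy : G (y - q) (y - q) ≠ 0) :
    ContDiffAt ℝ 2 (poleFun G q A) y := by
  have h1 : ContDiffAt ℝ 2 (fun y => G (y - q) (y - q)) y := by fun_prop
  exact (h1.log hy).add (contDiffAt_const.mul (h1.sqrt hy))

theorem hasFDerivAt_quadratic (hsymm : ∀ x y, G x y = G y x) :
    HasFDerivAt (fun y => G (y - q) (y - q)) ((2 : ℝ) • G (y - q)) y := by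
  have h0 := (hasFDerivAt_id (𝕜 := ℝ) y).sub_const q
  have h1 := (G.hasFDerivAt.comp y h0).clm_apply h0
  refine h1.congr_fderiv ?_
  ext v
  simp [hsymm v]
  ring

theorem fderiv_poleFun (hsymm : ∀ x y, G x y = G y x) (A : ℝ) (hy : 0 < G (y - q) (y - q)) :
    fderiv ℝ (poleFun G q A) y
      = (2 / G (y - q) (y - q) + A / √(G (y - q) (y - q))) • G (y - q) := by
  have h1 := hasFDerivAt_quadratic (q := q) (y := y) hsymm
  have h2 := (h1.log hy.ne').add ((h1.sqrt hy.ne').const_mul A)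
  have h3 : HasFDerivAt (poleFun G q A) _ y := h2
  rw [h3.fderiv]
  have := Real.sqrt_ne_zero'.2 hy
  ext v
  simp
  field_simp

theorem hasFDerivAt_poleFun_coeff (hsymm : ∀ x y, G x y = G y x) (A : ℝ)
    {s : ℝ} (hs : 0 < s) (hy : G (y - q) (y - q) = s ^ 2) :
    HasFDerivAt (fun y => 2 / G (y - q) (y - q) + A / √(G (y - q) (y - q)))
      ((-(4 / s ^ 4 + A / s ^ 3)) • G (y - q)) y := by
  have h1 := hasFDerivAt_quadratic (q := q) (y := y) hsymm
  have hne : G (y - q) (y - q) ≠ 0 := by rw [hy]; positivity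
  have hss : √(G (y - q) (y - q)) = s := by rw [hy, Real.sqrt_sq hs.le]
  have d1 : HasDerivAt (fun t : ℝ => 2 / t + A / √t)
      (-(2 / s ^ 4 + A / (2 * s ^ 3))) (G (y - q) (y - q)) := by
    have a1 := (hasDerivAt_inv hne).const_mul 2
    have a2 := (((hasDerivAt_id' (G (y - q) (y - q))).sqrt hne).inv (by rw [hss]; exact hs.ne')).const_mul A
    refine (a1.add a2).congr_deriv ?_
    rw [hss, hy]
    field_simp
    try ring
  have := d1.comp_hasFDerivAt y h1
  refine this.congr_fderiv ?_
  rw [smul_smul]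
  congr 1
  field_simp
  ring

end Real

variable [NormedSpace ℂ V]

theorem le_leviForm_poleFun {G : V →L[ℝ] V →L[ℝ] ℝ} (hsymm : ∀ x y, G x y = G y x)
    (hpos : ∀ x, ‖x‖ ^ 2 ≤ G x x) {C S κ : ℝ} (hC : 0 ≤ C) (hle : ∀ x, G x x ≤ C ^ 2 * ‖x‖ ^ 2)
    {J : V → V →L[ℝ] V} {J₀ : V →L[ℝ] V} (hJ₀ : ∀ x, J₀ (J₀ x) = -x)
    (hG : ∀ x y, G (J₀ x) (J₀ y) = G x y) {q y : V} (hyq : y ≠ q) (hS : C * ‖y - q‖ ≤ S)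
    (hJ : DifferentiableAt ℝ J y) (hsq : (J y).comp (J y) = -ContinuousLinearMap.id ℝ V)
    (hJC : ‖J y‖ ≤ C) (hDJ : ‖fderiv ℝ J y‖ ≤ C) (hJJ : ‖J y - J₀‖ ≤ C * ‖y - q‖)
    (hκ : κ = 2 * C ^ 2 + 2 * C ^ 3 + C ^ 4 * S) (X : V) :
    -(12 * κ ^ 2 * C ^ 2 * ‖X‖ ^ 2) ≤ leviForm J (poleFun G q (6 * κ)) y X := by
  have hG0 : ∀ {z}, z ≠ q → 0 < G (z - q) (z - q) := fun hz =>
    (pow_pos (norm_pos_iff.2 (sub_ne_zero.2 hz)) 2).trans_le (hpos _)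
  set s := √(G (y - q) (y - q)) with hs
  have hs0 : 0 < s := Real.sqrt_pos.2 (hG0 hyq)
  have hys : G (y - q) (y - q) = s ^ 2 := (Real.sq_sqrt (hG0 hyq).le).symm
  have hsS : s ≤ S := by
    refine (abs_le_of_sq_le_sq' ?_ (by positivity)).2.trans hS
    rw [← hys]
    exact (hle _).trans_eq (by ring)
  have hW : ‖fderiv ℝ J y X (J y X) - fderiv ℝ J y (J y X) X‖ ≤ 2 * C ^ 2 * ‖X‖ ^ 2 := by
    have h1 : ‖J y X‖ ≤ C * ‖X‖ := ContinuousLinearMap.le_of_opNorm_le _ hJC X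
    have h2 : ∀ U W, ‖fderiv ℝ J y U W‖ ≤ C * ‖U‖ * ‖W‖ := fun U W =>
      ContinuousLinearMap.le_of_opNorm_le _ (ContinuousLinearMap.le_of_opNorm_le _ hDJ U) W
    calc _ ≤ C * ‖X‖ * ‖J y X‖ + C * ‖J y X‖ * ‖X‖ :=
          (norm_sub_le _ _).trans (add_le_add (h2 _ _) (h2 _ _))
      _ ≤ C * ‖X‖ * (C * ‖X‖) + C * (C * ‖X‖) * ‖X‖ := by gcongr
      _ = _ := by ring
  obtain ⟨b1, b2⟩ := hermitian_perturbation_bounds hsymm hpos hC hle hJ₀ hG hs0.le hsS hys hJJ hW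
  rw [← hκ] at b1 b2
  have hfd : ∀ᶠ z in 𝓝 y, fderiv ℝ (poleFun G q (6 * κ)) z
      = (2 / G (z - q) (z - q) + 6 * κ / √(G (z - q) (z - q))) • G (z - q) := by
    filter_upwards [isOpen_ne.mem_nhds hyq] with z hz
    exact fderiv_poleFun hsymm _ (hG0 hz)
  rw [leviForm_eq_of_fderiv_eq hfd (hasFDerivAt_poleFun_coeff hsymm _ hs0 hys) hJ hsq, ← hs, hys]
  simp only [smul_apply, smul_eq_mul]
  have hS0 : 0 ≤ S := hs0.le.trans hsS
  have hκ0 : 0 ≤ κ := by rw [hκ]; positivity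
  set n := G X X
  set W := G (y - q) (fderiv ℝ J y X (J y X) - fderiv ℝ J y (J y X) X)
  have hn : n ≤ C ^ 2 * ‖X‖ ^ 2 := hle X
  have c1 : (4 / s ^ 4 + 6 * κ / s ^ 3) * (G (y - q) X ^ 2 + G (y - q) (J y X) ^ 2)
      ≤ (4 / s ^ 4 + 6 * κ / s ^ 3) * (s ^ 2 * (1 + κ * s) * n) := by gcongr
  have c2 : (2 / s ^ 2 + 6 * κ / s) * ((2 - κ * s) * n)
      ≤ (2 / s ^ 2 + 6 * κ / s) * (n + G (J y X) (J y X) - W) := by gcongr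
  have c3 : (2 / s ^ 2 + 6 * κ / s) * ((2 - κ * s) * n)
      - (4 / s ^ 4 + 6 * κ / s ^ 3) * (s ^ 2 * (1 + κ * s) * n) = -(12 * κ ^ 2 * n) := by
    field_simp
    ring
  have c4 : 12 * κ ^ 2 * n ≤ 12 * κ ^ 2 * (C ^ 2 * ‖X‖ ^ 2) := by gcongr
  linarith

end PoleFunction

section UniformBounds

variable {V : Type*} [NormedAddCommGroup V] [NormedSpace ℂ V] {Ω K : Set V}
  {J : V → V →L[ℝ] V} {φ : V → ℝ}

theorem continuousOn_leviForm (hΩ : IsOpen Ω) (hJ : ContDiffOn ℝ (⊤ : ℕ∞) J Ω)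
    (hφ : ContDiffOn ℝ 2 φ Ω) :
    ContinuousOn (fun z : V × V => leviForm J φ z.1 z.2) (Ω ×ˢ univ) := by
  have h1 : ContDiffOn ℝ 1 (fun y => (fderiv ℝ φ y).comp (J y)) Ω :=
    (hφ.fderiv_of_isOpen hΩ (by norm_num)).clm_comp (hJ.of_le (by exact_mod_cast le_top))
  have hmaps : MapsTo (Prod.fst : V × V → V) (Ω ×ˢ univ) Ω := fun z hz => hz.1
  have h2 := (h1.continuousOn_fderiv_of_isOpen hΩ le_rfl).comp continuous_fst.continuousOn hmaps
  have h3 := hJ.continuousOn.comp continuous_fst.continuousOn hmaps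
  have h4 : ContinuousOn (fun z : V × V => J z.1 z.2) (Ω ×ˢ univ) :=
    h3.clm_apply continuous_snd.continuousOn
  exact (((h2.clm_apply continuous_snd.continuousOn).clm_apply h4).sub
    ((h2.clm_apply h4).clm_apply continuous_snd.continuousOn)).neg

theorem leviForm_smul (t : ℝ) (x X : V) : leviForm J φ x (t • X) = t ^ 2 * leviForm J φ x X := by
  simp only [leviForm, map_smul, smul_apply, smul_eq_mul]
  ring

theorem leviForm_eq_norm_sq_mul (x : V) {X : V} (hX : X ≠ 0) :
    leviForm J φ x X = ‖X‖ ^ 2 * leviForm J φ x (‖X‖⁻¹ • X) := by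
  rw [leviForm_smul, inv_pow, mul_inv_cancel_left₀ (by positivity)]

theorem leviForm_zero_right (x : V) : leviForm J φ x 0 = 0 := by
  simp [leviForm]

theorem exists_norm_sub_le_of_contDiffOn {W : Type*} [NormedAddCommGroup W] [NormedSpace ℝ W]
    {f : V → W} (hΩ : IsOpen Ω) (hf : ContDiffOn ℝ 1 f Ω) (hK : IsCompact K) (hKΩ : K ⊆ Ω) :
    ∃ C : ℝ, 0 ≤ C ∧ ∀ x ∈ K, ∀ y ∈ K, ‖f x - f y‖ ≤ C * ‖x - y‖ := by
  have h1 : LocallyLipschitzOn K f := fun x hx => by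
    obtain ⟨C, t, ht, hlip⟩ :=
      (hf.contDiffAt (hΩ.mem_nhds (hKΩ hx))).exists_lipschitzOnWith
    exact ⟨C, t, mem_nhdsWithin_of_mem_nhds ht, hlip⟩
  obtain ⟨C, hC⟩ := h1.exists_lipschitzOnWith_of_compact hK
  exact ⟨C, C.2, fun x hx y hy => by simpa [dist_eq_norm] using hC.dist_le_mul x hx y hy⟩

theorem exists_hermitian_form {G₀ : V →L[ℝ] V →L[ℝ] ℝ} (hsymm : ∀ x y, G₀ x y = G₀ y x)
    (hG₀ : ∀ x, G₀ x x = ‖x‖ ^ 2) {J₀ : V →L[ℝ] V} (hJ₀ : ∀ x, J₀ (J₀ x) = -x) {b C : ℝ}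
    (hb : ‖J₀‖ ≤ b) (hC : 1 + b ≤ C) :
    ∃ G : V →L[ℝ] V →L[ℝ] ℝ, (∀ x y, G x y = G y x) ∧ (∀ x, ‖x‖ ^ 2 ≤ G x x) ∧
      (∀ x, G x x ≤ C ^ 2 * ‖x‖ ^ 2) ∧ ∀ x y, G (J₀ x) (J₀ y) = G x y := by
  have hG : ∀ x y, (G₀ + G₀.bilinearComp J₀ J₀) x y = G₀ x y + G₀ (J₀ x) (J₀ y) :=
    fun x y => by simp
  refine ⟨G₀ + G₀.bilinearComp J₀ J₀, fun x y => ?_, fun x => ?_, fun x => ?_, fun x y => ?_⟩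
  · rw [hG, hG, hsymm x, hsymm (J₀ x)]
  · rw [hG, hG₀, hG₀]
    nlinarith [sq_nonneg ‖J₀ x‖]
  · rw [hG, hG₀, hG₀]
    have hb0 : 0 ≤ b := (norm_nonneg _).trans hb
    have h1 : ‖J₀ x‖ ≤ b * ‖x‖ := ContinuousLinearMap.le_of_opNorm_le _ hb x
    have h2 : ‖J₀ x‖ ^ 2 ≤ b ^ 2 * ‖x‖ ^ 2 := by
      rw [← mul_pow]; gcongr
    have h3 : 1 + b ^ 2 ≤ C ^ 2 := by nlinarith
    nlinarith [sq_nonneg ‖x‖]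
  · rw [hG, hG, hJ₀, hJ₀]
    simp [add_comm]

theorem plurisubharmonic_poleFun_add {r : V → ℝ} {G : V →L[ℝ] V →L[ℝ] ℝ}
    (hsymm : ∀ x y, G x y = G y x) (hpos : ∀ x, ‖x‖ ^ 2 ≤ G x x) {C S κ lam : ℝ} (hC : 0 ≤ C)
    (hle : ∀ x, G x x ≤ C ^ 2 * ‖x‖ ^ 2) {J₀ : V →L[ℝ] V} (hJ₀ : ∀ x, J₀ (J₀ x) = -x)
    (hG : ∀ x y, G (J₀ x) (J₀ y) = G x y) {q y : V} (hyq : y ≠ q) (hS : C * ‖y - q‖ ≤ S)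
    (hJ : DifferentiableAt ℝ J y) (hsq : (J y).comp (J y) = -ContinuousLinearMap.id ℝ V)
    (hJC : ‖J y‖ ≤ C) (hDJ : ‖fderiv ℝ J y‖ ≤ C) (hJJ : ‖J y - J₀‖ ≤ C * ‖y - q‖)
    (hκ : κ = 2 * C ^ 2 + 2 * C ^ 3 + C ^ 4 * S) (hr : ContDiffAt ℝ 2 r y) (hlam : 0 < lam)
    (hlevi : ∀ X, lam * ‖X‖ ^ 2 ≤ leviForm J r y X) :
    ContDiffAt ℝ 2 (fun y => poleFun G q (6 * κ) y + 12 * κ ^ 2 * C ^ 2 / lam * r y) y ∧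
      ∀ X, 0 ≤ leviForm J (fun y => poleFun G q (6 * κ) y + 12 * κ ^ 2 * C ^ 2 / lam * r y) y X := by
  have hp2 : ContDiffAt ℝ 2 (poleFun G q (6 * κ)) y :=
    contDiffAt_poleFun _ (((pow_pos (norm_pos_iff.2 (sub_ne_zero.2 hyq)) 2).trans_le (hpos _)).ne')
  refine ⟨hp2.add (contDiffAt_const.mul hr), fun X => ?_⟩
  rw [leviForm_add_const_mul _ hJ hp2 hr]
  have h1 := le_leviForm_poleFun hsymm hpos hC hle hJ₀ hG hyq hS hJ hsq hJC hDJ hJJ hκ X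
  have h2 : 12 * κ ^ 2 * C ^ 2 / lam * (lam * ‖X‖ ^ 2)
      ≤ 12 * κ ^ 2 * C ^ 2 / lam * leviForm J r y X := by
    gcongr
    exact hlevi X
  have h3 : 12 * κ ^ 2 * C ^ 2 / lam * (lam * ‖X‖ ^ 2) = 12 * κ ^ 2 * C ^ 2 * ‖X‖ ^ 2 := by
    field_simp
  linarith

variable [ProperSpace V]

theorem exists_pos_mul_norm_sq_le_leviForm (hΩ : IsOpen Ω) (hJ : ContDiffOn ℝ (⊤ : ℕ∞) J Ω)
    (hφ : ContDiffOn ℝ 2 φ Ω) (hpsh : StrictPSHOn J φ Ω) (hK : IsCompact K) (hKΩ : K ⊆ Ω) :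
    ∃ lam > 0, ∀ x ∈ K, ∀ X, lam * ‖X‖ ^ 2 ≤ leviForm J φ x X := by
  have hcont := (continuousOn_leviForm hΩ hJ hφ).mono (prod_mono hKΩ (subset_univ (sphere 0 1)))
  have hc : IsCompact (K ×ˢ sphere (0 : V) 1) := hK.prod (isCompact_sphere 0 1)
  have key : ∃ lam > 0, ∀ z ∈ K ×ˢ sphere (0 : V) 1, lam ≤ leviForm J φ z.1 z.2 := by
    rcases (K ×ˢ sphere (0 : V) 1).eq_empty_or_nonempty with he | hne
    · exact ⟨1, one_pos, by simp [he]⟩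
    · obtain ⟨z, hz, hmin⟩ := hc.exists_isMinOn hne hcont
      refine ⟨_, hpsh z.1 (hKΩ hz.1) z.2 ?_, fun w hw => hmin hw⟩
      rintro h0
      simpa [h0] using hz.2
  obtain ⟨lam, hlam, hle⟩ := key
  refine ⟨lam, hlam, fun x hx X => ?_⟩
  by_cases hX : X = 0
  · simp [hX, leviForm_zero_right]
  rw [leviForm_eq_norm_sq_mul x hX, mul_comm]
  gcongr
  exact hle (x, ‖X‖⁻¹ • X) ⟨hx, by simp [norm_smul, hX]⟩

theorem exists_leviForm_le_mul_norm_sq (hΩ : IsOpen Ω) (hJ : ContDiffOn ℝ (⊤ : ℕ∞) J Ω)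
    (hφ : ContDiffOn ℝ 2 φ Ω) (hK : IsCompact K) (hKΩ : K ⊆ Ω) :
    ∃ M > 0, ∀ x ∈ K, ∀ X, leviForm J φ x X ≤ M * ‖X‖ ^ 2 := by
  have hcont := (continuousOn_leviForm hΩ hJ hφ).mono (prod_mono hKΩ (subset_univ (sphere 0 1)))
  have hc : IsCompact (K ×ˢ sphere (0 : V) 1) := hK.prod (isCompact_sphere 0 1)
  obtain ⟨M, hM⟩ := hc.exists_bound_of_continuousOn hcont
  refine ⟨max M 1, by positivity, fun x hx X => ?_⟩
  by_cases hX : X = 0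
  · simp [hX, leviForm_zero_right]
  rw [leviForm_eq_norm_sq_mul x hX, mul_comm]
  gcongr
  exact ((le_abs_self _).trans (hM (x, ‖X‖⁻¹ • X) ⟨hx, by simp [norm_smul, hX]⟩)).trans
    (le_max_left _ _)

/-- Plurisubharmonic functions with logarithmic poles, with uniform constants. -/
theorem exists_poleFun_plurisubharmonic {r : V → ℝ} (hΩ : IsOpen Ω)
    (hJ : IsACS Ω J) (hr : ContDiffOn ℝ 2 r Ω) (hpsh : StrictPSHOn J r Ω) (hK : IsCompact K)
    (hKΩ : K ⊆ Ω) {G₀ : V →L[ℝ] V →L[ℝ] ℝ} (hsymm : ∀ x y, G₀ x y = G₀ y x)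
    (hG₀ : ∀ x, G₀ x x = ‖x‖ ^ 2) :
    ∃ A B C : ℝ, 0 ≤ A ∧ 0 ≤ B ∧ 1 ≤ C ∧ ∀ q ∈ K, ∃ G : V →L[ℝ] V →L[ℝ] ℝ,
      (∀ x, ‖x‖ ^ 2 ≤ G x x) ∧ (∀ x, G x x ≤ C ^ 2 * ‖x‖ ^ 2) ∧ ∀ y ∈ K, y ≠ q →
        ContDiffAt ℝ 2 (fun y => poleFun G q A y + B * r y) y ∧
        ∀ X, 0 ≤ leviForm J (fun y => poleFun G q A y + B * r y) y X := by
  have hJ1 : ContDiffOn ℝ 1 J Ω := hJ.smooth.of_le (by exact_mod_cast le_top)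
  obtain ⟨lam, hlam, hlevi⟩ := exists_pos_mul_norm_sq_le_leviForm hΩ hJ.smooth hr hpsh hK hKΩ
  obtain ⟨C₁, hC₁, hLip⟩ := exists_norm_sub_le_of_contDiffOn hΩ hJ1 hK hKΩ
  obtain ⟨C₂, hC₂⟩ := hK.exists_bound_of_continuousOn (hJ1.continuousOn.mono hKΩ)
  obtain ⟨C₃, hC₃⟩ := hK.exists_bound_of_continuousOn
    ((hJ1.continuousOn_fderiv_of_isOpen hΩ le_rfl).mono hKΩ)
  obtain ⟨d, hd⟩ := hK.isBounded.exists_norm_le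
  obtain ⟨C, hC0, e1, e2, e3⟩ : ∃ C : ℝ, 1 ≤ C ∧ C₁ ≤ C ∧ 1 + |C₂| ≤ C ∧ C₃ ≤ C :=
    ⟨1 + |C₂| + (C₁ + |C₃|), by linarith [abs_nonneg C₂, abs_nonneg C₃],
      by linarith [abs_nonneg C₂, abs_nonneg C₃], by linarith [abs_nonneg C₃],
      by linarith [abs_nonneg C₂, le_abs_self C₃]⟩
  have hd0 : ∀ y ∈ K, ∀ q ∈ K, C * ‖y - q‖ ≤ C * (2 * |d|) := fun y hy q hq => by
    gcongr
    linarith [norm_sub_le y q, hd y hy, hd q hq, le_abs_self d]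
  refine ⟨6 * (2 * C ^ 2 + 2 * C ^ 3 + C ^ 4 * (C * (2 * |d|))),
    12 * (2 * C ^ 2 + 2 * C ^ 3 + C ^ 4 * (C * (2 * |d|))) ^ 2 * C ^ 2 / lam, C,
    by positivity, by positivity, hC0, fun q hq => ?_⟩
  have hsq : ∀ x, J q (J q x) = -x := fun x => by
    simpa using DFunLike.congr_fun (hJ.sq q (hKΩ hq)) x
  obtain ⟨G, g1, g2, g3, g4⟩ := exists_hermitian_form hsymm hG₀ hsq
    ((hC₂ q hq).trans (le_abs_self _)) e2
  refine ⟨G, g2, g3, fun y hy hyq => ?_⟩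
  have hyn : Ω ∈ 𝓝 y := hΩ.mem_nhds (hKΩ hy)
  have hJd : DifferentiableAt ℝ J y := (hJ1.contDiffAt hyn).differentiableAt (by norm_num)
  have hJy : ‖J y‖ ≤ C := by linarith [hC₂ y hy, le_abs_self C₂]
  have hJJ : ‖J y - J q‖ ≤ C * ‖y - q‖ := (hLip y hy q hq).trans (by gcongr)
  exact plurisubharmonic_poleFun_add g1 g2 (by linarith) g3 hsq g4 hyq (hd0 y hy q hq) hJd
    (hJ.sq y (hKΩ hy)) hJy ((hC₃ y hy).trans e3) hJJ rfl (hr.contDiffAt hyn) hlam (hlevi y hy)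

end UniformBounds

section Schwarz

variable {V : Type*} [NormedAddCommGroup V] [NormedSpace ℂ V] [CompleteSpace V]
  {J : V → V →L[ℝ] V} {K : Set V} {N w : V → ℝ} {q : V} {h : ℂ → V} {z : ℂ} {C β M d : ℝ}

/-- The maximum principle for a logarithmic pole compared with `a * log ‖ζ - z‖`, `a < 2`. -/
theorem logPole_comp_le {a : ℝ} (ha : a < 2) (hNc : Continuous N) (hwc : ContinuousOn w K)
    (hN₁ : ∀ y, ‖y - q‖ ^ 2 ≤ N y) (hN₂ : ∀ y, N y ≤ C ^ 2 * ‖y - q‖ ^ 2)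
    (hw : ∀ y ∈ K, |w y| ≤ β) (hJ : ∀ y ∈ K, DifferentiableAt ℝ J y)
    (hΦ : ∀ y ∈ K, y ≠ q → ContDiffAt ℝ 2 (fun y => Real.log (N y) + w y) y)
    (hlevi : ∀ y ∈ K, y ≠ q → ∀ X, 0 ≤ leviForm J (fun y => Real.log (N y) + w y) y X)
    (hq : h z = q) (hmaps : ∀ ζ ∈ closedBall z d, h ζ ∈ K)
    (hh : ∀ ζ ∈ closedBall z d, IsCRAt J h ζ)
    (hL : ∀ ζ ∈ ball z d, ∃ L, ∀ᶠ ξ in 𝓝 ζ, ‖fderiv ℝ h ξ‖ ≤ L)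
    (hC : 1 ≤ C) (hM : 0 < M) (hhM : ∀ ζ ∈ closedBall z d, ‖h ζ - q‖ ≤ M)
    {ζ : ℂ} (hζ : ζ ∈ closedBall z d) (hζz : ζ ≠ z) :
    N (h ζ) * Real.exp (w (h ζ)) * Real.exp (-a * Real.log ‖ζ - z‖)
      ≤ C ^ 2 * M ^ 2 * Real.exp β * Real.exp (-a * Real.log d) := by
  have hζ0 : 0 < ‖ζ - z‖ := norm_pos_iff.2 (sub_ne_zero.2 hζz)
  have hζd : ‖ζ - z‖ ≤ d := by rwa [← dist_eq_norm]
  have hd : 0 < d := hζ0.trans_le hζd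
  set T : ℂ → ℝ := fun ζ =>
    N (h ζ) * Real.exp (w (h ζ)) * Real.exp (-a * Real.log ‖ζ - z‖) with hT
  set m := C ^ 2 * M ^ 2 * Real.exp β * Real.exp (-a * Real.log d) with hm
  have hN0 : ∀ y, 0 ≤ N y := fun y => (sq_nonneg _).trans (hN₁ y)
  have hT0 : ∀ ζ, 0 ≤ T ζ := fun ζ =>
    mul_nonneg (mul_nonneg (hN0 _) (Real.exp_pos _).le) (Real.exp_pos _).le
  have hTle : ∀ {ζ : ℂ} {t : ℝ}, ζ ∈ closedBall z d → ‖h ζ - q‖ ≤ t →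
      T ζ ≤ C ^ 2 * t ^ 2 * Real.exp β * Real.exp (-a * Real.log ‖ζ - z‖) := by
    intro ζ t hζ ht
    have h1 : w (h ζ) ≤ β := (le_abs_self _).trans (hw _ (hmaps ζ hζ))
    have h2 : N (h ζ) ≤ C ^ 2 * t ^ 2 := (hN₂ _).trans (by gcongr)
    simp only [hT]
    gcongr
  -- behaviour near the centre
  obtain ⟨s, hs0, hsζ, hs⟩ : ∃ s > 0, s < ‖ζ - z‖ ∧ ∀ ξ, ‖ξ - z‖ = s → T ξ ≤ m := by
    obtain ⟨c, hc⟩ := (hh z (mem_closedBall_self hd.le)).1.isBigO_sub.bound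
    obtain ⟨δ, hδ, hball⟩ := Metric.eventually_nhds_iff_ball.1 hc
    have hlim : Tendsto (fun t : ℝ => C ^ 2 * c ^ 2 * Real.exp β * Real.exp ((2 - a) * Real.log t))
        (𝓝[>] 0) (𝓝 0) := by
      have := (Real.tendsto_exp_atBot.comp (Real.tendsto_log_nhdsGT_zero.const_mul_atBot
        (sub_pos.2 ha))).const_mul (C ^ 2 * c ^ 2 * Real.exp β)
      simpa using this
    have hm0 : 0 < m := by positivity
    obtain ⟨s, hs, hs1, hs2⟩ := ((hlim.eventually (gt_mem_nhds hm0)).and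
      (Ioo_mem_nhdsGT (lt_min hδ hζ0))).exists
    refine ⟨s, hs1, hs2.trans_le (min_le_right _ _), fun ξ hξ => ?_⟩
    have h1 : ξ ∈ closedBall z d := by
      rw [mem_closedBall, dist_eq_norm, hξ]
      exact (hs2.trans_le (min_le_right _ _)).le.trans hζd
    have h2 := hball ξ (by rw [mem_ball, dist_eq_norm, hξ]; exact hs2.trans_le (min_le_left _ _))
    rw [hq, hξ] at h2
    refine (hTle h1 h2).trans (le_trans (le_of_eq ?_) hs.le)
    have h3 : Real.exp ((2 - a) * Real.log s) = s ^ 2 * Real.exp (-a * Real.log s) := by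
      have : (2 - a) * Real.log s = Real.log s + Real.log s + -a * Real.log s := by ring
      rw [this, Real.exp_add, Real.exp_add, Real.exp_log hs1]
      ring
    rw [hξ, h3]
    ring
  set A : Set ℂ := closedBall z d \ ball z s with hA
  have hAd : ∀ {ξ}, ξ ∈ A → ξ ∈ closedBall z d := fun hξ => hξ.1
  have hAs : ∀ {ξ}, ξ ∈ A → s ≤ ‖ξ - z‖ := fun hξ => by
    have := hξ.2
    rwa [mem_ball, not_lt, dist_eq_norm] at this
  have hhc : ∀ ξ ∈ closedBall z d, ContinuousAt h ξ := fun ξ hξ => (hh ξ hξ).1.continuousAt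
  have hTc : ContinuousOn T A := by
    have h1 : ContinuousOn h A := fun ξ hξ => (hhc ξ (hAd hξ)).continuousWithinAt
    have h2 : ContinuousOn (fun ξ => w (h ξ)) A := hwc.comp h1 fun ξ hξ => hmaps ξ (hAd hξ)
    have h3 : ContinuousOn (fun ξ : ℂ => Real.log ‖ξ - z‖) A :=
      (continuous_norm.comp (continuous_sub_right z)).continuousOn.log fun ξ hξ =>
        (hs0.trans_le (hAs hξ)).ne'
    exact ((hNc.comp_continuousOn h1).mul h2.rexp).mul (continuousOn_const.mul h3).rexp
  refine le_of_forall_isLocalMax_eventually_eq (S := sphere z s ∪ sphere z d) (u := T)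
    ((isCompact_closedBall z d).diff isOpen_ball) hTc (fun ξ hξ hξS => ?_) (fun ξ hξ hξS => ?_)
    (⟨hζ, fun hc => ?_⟩ : ζ ∈ A)
  · have hξs : s < dist ξ z := by
      rw [dist_eq_norm]
      exact lt_of_le_of_ne (hAs hξ) fun he => hξS (Or.inl (by rw [mem_sphere, dist_eq_norm, he]))
    have hξd : ξ ∈ ball z d := lt_of_le_of_ne (hAd hξ) fun he => hξS (Or.inr he)
    have hξz : ξ ≠ z := dist_pos.1 (hs0.trans hξs)
    refine ⟨?_, fun hmax => ?_⟩
    · filter_upwards [isOpen_ball.mem_nhds hξd,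
        isClosed_closedBall.isOpen_compl.mem_nhds (show ξ ∈ (closedBall z s)ᶜ by simpa using hξs)]
        with x hx1 hx2
      exact ⟨ball_subset_closedBall hx1, fun hx => hx2 (ball_subset_closedBall hx)⟩
    · by_cases hhq : h ξ = q
      · have hTξ : T ξ = 0 := by
          have : N q = 0 := le_antisymm (by simpa using hN₂ q) (hN0 q)
          simp [hT, hhq, this]
        filter_upwards [hmax] with x hx
        exact le_antisymm hx (hTξ ▸ hT0 x)
      have hball : ∀ᶠ x in 𝓝 ξ, x ∈ ball z d := isOpen_ball.mem_nhds hξd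
      have hne : ∀ᶠ x in 𝓝 ξ, h x ≠ q :=
        (hhc ξ (hAd hξ)).eventually_ne hhq
      set v : ℂ → ℝ := fun x => (Real.log (N (h x)) + w (h x)) + -a * Real.log ‖x - z‖ with hv
      have hTv : ∀ x, h x ≠ q → T x = Real.exp (v x) := fun x hx => by
        have : 0 < N (h x) := (pow_pos (norm_pos_iff.2 (sub_ne_zero.2 hx)) 2).trans_le (hN₁ _)
        simp only [hT, hv]
        rw [Real.exp_add, Real.exp_add, Real.exp_log this]
      obtain ⟨L, hLξ⟩ := hL ξ hξd
      have hsub : IsSubMeanAt v ξ := by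
        refine (isSubMeanAt_comp (J := J) (L := L) (Ψ := fun y => Real.log (N y) + w y) ?_ hLξ
          ?_ ?_ ?_).add (isSubMeanAt_const_mul_log_norm_sub (-a) hξz)
        · exact hball.mono fun x hx => hh x (ball_subset_closedBall hx)
        · exact hball.mono fun x hx => hJ _ (hmaps x (ball_subset_closedBall hx))
        · exact (hball.and hne).mono fun x hx => hΦ _ (hmaps x (ball_subset_closedBall hx.1)) hx.2
        · exact (hball.and hne).mono fun x hx =>
            hlevi _ (hmaps x (ball_subset_closedBall hx.1)) hx.2
      have hvmax : IsLocalMax v ξ := by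
        filter_upwards [hmax, hne] with x hx1 hx2
        rwa [hTv x hx2, hTv ξ hhq, Real.exp_le_exp] at hx1
      filter_upwards [hsub.eventually_eq_of_isLocalMax hvmax, hne] with x hx1 hx2
      rw [hTv x hx2, hTv ξ hhq, hx1]
  · rcases hξS with hξS | hξS
    · exact hs ξ (by rw [← dist_eq_norm]; exact hξS)
    · have := hTle (hAd hξ) (hhM ξ (hAd hξ))
      rwa [← dist_eq_norm, mem_sphere.1 hξS] at this
  · rw [mem_ball, dist_eq_norm] at hc
    exact absurd hc hsζ.not_gt

/-- A Schwarz lemma for `J`-holomorphic maps. -/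
theorem norm_sub_le_of_logPole (hNc : Continuous N) (hwc : ContinuousOn w K)
    (hN₁ : ∀ y, ‖y - q‖ ^ 2 ≤ N y) (hN₂ : ∀ y, N y ≤ C ^ 2 * ‖y - q‖ ^ 2)
    (hw : ∀ y ∈ K, |w y| ≤ β) (hJ : ∀ y ∈ K, DifferentiableAt ℝ J y)
    (hΦ : ∀ y ∈ K, y ≠ q → ContDiffAt ℝ 2 (fun y => Real.log (N y) + w y) y)
    (hlevi : ∀ y ∈ K, y ≠ q → ∀ X, 0 ≤ leviForm J (fun y => Real.log (N y) + w y) y X)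
    (hq : h z = q) (hmaps : ∀ ζ ∈ ball z d, h ζ ∈ K)
    (hh : ∀ ζ ∈ ball z d, IsCRAt J h ζ)
    (hL : ∀ ζ ∈ ball z d, ∃ L, ∀ᶠ ξ in 𝓝 ζ, ‖fderiv ℝ h ξ‖ ≤ L)
    (hC : 1 ≤ C) (hM : 0 < M) (hhM : ∀ ζ ∈ ball z d, ‖h ζ - q‖ ≤ M)
    {ζ : ℂ} (hζ : ζ ∈ ball z d) :
    ‖h ζ - q‖ ≤ 2 * C * Real.exp β * M * ‖ζ - z‖ / d := by
  have hζd : ‖ζ - z‖ < d := by rwa [← dist_eq_norm]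
  have hd : 0 < d := (norm_nonneg _).trans_lt hζd
  by_cases hζz : ζ = z
  · simp [hζz, hq]
  have hζ0 : 0 < ‖ζ - z‖ := norm_pos_iff.2 (sub_ne_zero.2 hζz)
  have hβ0 : 0 ≤ β := (abs_nonneg _).trans (hw _ (hmaps ζ hζ))
  rcases le_or_gt ‖ζ - z‖ (d / 2) with hle | hgt
  · have hsub : closedBall z (d / 2) ⊆ ball z d := closedBall_subset_ball (by linarith)
    have key : ∀ a < (2 : ℝ), _ := fun a ha => logPole_comp_le ha hNc hwc hN₁ hN₂ hw hJ hΦ hlevi hq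
      (fun ζ hζ => hmaps ζ (hsub hζ)) (fun ζ hζ => hh ζ (hsub hζ))
      (fun ζ hζ => hL ζ (hsub (ball_subset_closedBall hζ))) hC hM
      (fun ζ hζ => hhM ζ (hsub hζ)) (by rwa [mem_closedBall, dist_eq_norm] : ζ ∈ _) hζz
    have key2 : N (h ζ) * Real.exp (w (h ζ)) * Real.exp (-2 * Real.log ‖ζ - z‖)
        ≤ C ^ 2 * M ^ 2 * Real.exp β * Real.exp (-2 * Real.log (d / 2)) := by
      have c1 : Tendsto (fun a : ℝ => N (h ζ) * Real.exp (w (h ζ)) *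
          Real.exp (-a * Real.log ‖ζ - z‖)) (𝓝[<] 2) (𝓝 (N (h ζ) * Real.exp (w (h ζ)) *
          Real.exp (-2 * Real.log ‖ζ - z‖))) :=
        (Continuous.tendsto (by fun_prop) 2).mono_left nhdsWithin_le_nhds
      have c2 : Tendsto (fun a : ℝ => C ^ 2 * M ^ 2 * Real.exp β *
          Real.exp (-a * Real.log (d / 2))) (𝓝[<] 2) (𝓝 (C ^ 2 * M ^ 2 * Real.exp β *
          Real.exp (-2 * Real.log (d / 2)))) :=
        (Continuous.tendsto (by fun_prop) 2).mono_left nhdsWithin_le_nhds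
      exact le_of_tendsto_of_tendsto c1 c2 (eventually_nhdsWithin_of_forall key)
    have hexp : ∀ {t : ℝ}, 0 < t → Real.exp (-2 * Real.log t) = (t ^ 2)⁻¹ := fun ht => by
      rw [neg_mul, Real.exp_neg, two_mul, Real.exp_add, Real.exp_log ht, sq]
    rw [hexp hζ0, hexp (half_pos hd), ← div_eq_mul_inv, ← div_eq_mul_inv,
      div_le_div_iff₀ (by positivity) (by positivity)] at key2
    have h1 : Real.exp (-β) ≤ Real.exp (w (h ζ)) :=
      Real.exp_le_exp.2 (neg_le_of_abs_le (hw _ (hmaps ζ hζ)))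
    have h2 : ‖h ζ - q‖ ^ 2 * Real.exp (-β) ≤ N (h ζ) * Real.exp (w (h ζ)) :=
      mul_le_mul (hN₁ _) h1 (Real.exp_pos _).le ((sq_nonneg _).trans (hN₁ _))
    have h3 : ‖h ζ - q‖ ^ 2 * Real.exp (-β) * (d / 2) ^ 2
        ≤ C ^ 2 * M ^ 2 * Real.exp β * ‖ζ - z‖ ^ 2 :=
      (mul_le_mul_of_nonneg_right h2 (by positivity)).trans key2
    have h4 : (‖h ζ - q‖ * (d / 2)) ^ 2 ≤ (C * M * Real.exp β * ‖ζ - z‖) ^ 2 := by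
      have h5 : Real.exp β * Real.exp (-β) = 1 := by rw [← Real.exp_add]; simp
      calc (‖h ζ - q‖ * (d / 2)) ^ 2
          = Real.exp β * (‖h ζ - q‖ ^ 2 * Real.exp (-β) * (d / 2) ^ 2) := by
            linear_combination (-(‖h ζ - q‖ * (d / 2)) ^ 2) * h5
        _ ≤ Real.exp β * (C ^ 2 * M ^ 2 * Real.exp β * ‖ζ - z‖ ^ 2) := by gcongr
        _ = _ := by ring
    have h6 := (abs_le_of_sq_le_sq' h4 (by positivity)).2
    rw [le_div_iff₀ hd]
    linarith
  · rw [le_div_iff₀ hd]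
    have h1 := hhM ζ hζ
    have h2 : (1 : ℝ) ≤ C * Real.exp β := by
      have := Real.one_le_exp hβ0
      nlinarith
    calc ‖h ζ - q‖ * d ≤ M * (2 * ‖ζ - z‖) := by gcongr; linarith
      _ ≤ (C * Real.exp β) * (M * (2 * ‖ζ - z‖)) := le_mul_of_one_le_left (by positivity) h2
      _ = _ := by ring

end Schwarz

section UniformSchwarz

variable {V : Type*} [NormedAddCommGroup V] [NormedSpace ℂ V] [ProperSpace V]
  {Ω K : Set V} {J : V → V →L[ℝ] V}

/-- A Schwarz lemma for `J`-holomorphic maps into a compact set, with a uniform constant. -/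
theorem exists_norm_sub_le_of_isCRAt {r : V → ℝ} (hΩ : IsOpen Ω) (hJ : IsACS Ω J)
    (hr : ContDiffOn ℝ 2 r Ω) (hpsh : StrictPSHOn J r Ω) (hK : IsCompact K) (hKΩ : K ⊆ Ω)
    {G₀ : V →L[ℝ] V →L[ℝ] ℝ} (hsymm : ∀ x y, G₀ x y = G₀ y x) (hG₀ : ∀ x, G₀ x x = ‖x‖ ^ 2) :
    ∃ C > 0, ∀ (h : ℂ → V) (z : ℂ) (d M : ℝ), (∀ ζ ∈ ball z d, h ζ ∈ K) →
      (∀ ζ ∈ ball z d, IsCRAt J h ζ) →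
      (∀ ζ ∈ ball z d, ∃ L, ∀ᶠ ξ in 𝓝 ζ, ‖fderiv ℝ h ξ‖ ≤ L) → 0 < M →
      (∀ ζ ∈ ball z d, ‖h ζ - h z‖ ≤ M) → ∀ ζ ∈ ball z d, ‖h ζ - h z‖ ≤ C * M * ‖ζ - z‖ / d := by
  obtain ⟨A, B, C, hA, hB, hC, hpole⟩ :=
    exists_poleFun_plurisubharmonic hΩ hJ hr hpsh hK hKΩ hsymm hG₀
  obtain ⟨R, hR⟩ := hK.exists_bound_of_continuousOn (hr.continuousOn.mono hKΩ)
  obtain ⟨T, hT⟩ := hK.isBounded.exists_norm_le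
  set β := A * (C * (2 * T)) + B * R
  refine ⟨2 * C * Real.exp β, by positivity, fun h z d M hmaps hh hL hM hosc ζ hζ => ?_⟩
  have hz : h z ∈ K := hmaps z (mem_ball_self (dist_nonneg.trans_lt hζ))
  obtain ⟨G, hG₁, hG₂, hG⟩ := hpole _ hz
  have hfun : (fun y => poleFun G (h z) A y + B * r y) = fun y =>
      Real.log (G (y - h z) (y - h z)) + (A * √(G (y - h z) (y - h z)) + B * r y) := by
    funext y
    simp only [poleFun]
    ring
  rw [hfun] at hG
  have hGc : Continuous fun y => G (y - h z) (y - h z) := by fun_prop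
  have hrK := hr.continuousOn.mono hKΩ
  refine norm_sub_le_of_logPole (J := J) (K := K) (N := fun y => G (y - h z) (y - h z))
    (w := fun y => A * √(G (y - h z) (y - h z)) + B * r y) (β := β) hGc
    ((hGc.sqrt.const_mul A).continuousOn.add (hrK.const_mul B)) (fun y => hG₁ _) (fun y => hG₂ _)
    (fun y hy => ?_) (fun y hy => ?_) (fun y hy hyq => (hG y hy hyq).1)
    (fun y hy hyq => (hG y hy hyq).2) rfl hmaps hh hL hC hM hosc hζ
  · have h1 : √(G (y - h z) (y - h z)) ≤ C * (2 * T) := by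
      refine Real.sqrt_le_iff.2 ⟨?_, (hG₂ _).trans ?_⟩
      · have := (norm_nonneg _).trans (hT y hy)
        positivity
      · rw [← mul_pow]
        gcongr
        linarith [norm_sub_le y (h z), hT y hy, hT _ hz]
    refine (abs_add_le _ _).trans (add_le_add ?_ ?_)
    · rw [abs_of_nonneg (by positivity)]
      gcongr
    · rw [abs_mul, abs_of_nonneg hB]
      gcongr
      exact hR y hy
  · exact ((hJ.smooth.contDiffAt (hΩ.mem_nhds (hKΩ hy))).differentiableAt (by simp))

end UniformSchwarz

section LocallyLipschitz

variable {V : Type*} [NormedAddCommGroup V] [NormedSpace ℝ V] {h : ℂ → V} {U : Set ℂ}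

/-- A differentiable map satisfying a Schwarz lemma on the discs where its derivative is locally
bounded has a locally bounded derivative. -/
theorem eventually_norm_fderiv_le_of_schwarz (hU : IsOpen U)
    (hh : ∀ ζ ∈ U, DifferentiableAt ℝ h ζ) {C : ℝ} (hC : 0 < C)
    (hS : ∀ (z : ℂ) (d M : ℝ), ball z d ⊆ U →
      (∀ ζ ∈ ball z d, ∃ L, ∀ᶠ ξ in 𝓝 ζ, ‖fderiv ℝ h ξ‖ ≤ L) → 0 < M →
      (∀ ζ ∈ ball z d, ‖h ζ - h z‖ ≤ M) → ∀ ζ ∈ ball z d, ‖h ζ - h z‖ ≤ C * M * ‖ζ - z‖ / d) :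
    ∀ ζ ∈ U, ∃ L, ∀ᶠ ξ in 𝓝 ζ, ‖fderiv ℝ h ξ‖ ≤ L := by
  set W : Set ℂ := {ζ | ∃ L, ∀ᶠ ξ in 𝓝 ζ, ‖fderiv ℝ h ξ‖ ≤ L} with hW
  have hWo : IsOpen W := isOpen_iff_eventually.2 fun ζ ⟨L, hL⟩ =>
    (eventually_eventually_nhds.2 hL).mono fun ξ hξ => ⟨L, hξ⟩
  change U ⊆ W
  by_contra hne
  obtain ⟨ζ₀, hζ₀, hζ₀W⟩ := not_subset.1 hne
  set P : Set ℂ := U ∩ Wᶜ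
  have : LocallyCompactSpace P := (hU.isLocallyClosed.inter
    hWo.isClosed_compl.isLocallyClosed).locallyCompactSpace
  have : Nonempty P := ⟨ζ₀, hζ₀, hζ₀W⟩
  set S : ℕ → Set P := fun n => {x | ∀ y ∈ U, dist y x < 1 / (n + 1) →
    ‖h y - h x‖ ≤ n * ‖y - x‖} with hSdef
  have hhP : Continuous fun x : P => h x := continuous_iff_continuousAt.2 fun x =>
    (hh x x.2.1).continuousAt.comp continuousAt_subtype_val
  have hSc : ∀ n, IsClosed (S n) := fun n => by
    simp only [hSdef, ofPred_forall]
    refine isClosed_iInter fun y => isClosed_iInter fun _ => ?_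
    exact isClosed_imp (isOpen_lt (by fun_prop) continuous_const)
      (isClosed_le (continuous_const.sub hhP).norm (by fun_prop))
  have hcover : ⋃ n, S n = univ := by
    refine eq_univ_of_forall fun x => mem_iUnion.2 ?_
    obtain ⟨c, hc⟩ := (hh x x.2.1).isBigO_sub.bound
    obtain ⟨δ, hδ, hball⟩ := Metric.eventually_nhds_iff_ball.1 hc
    obtain ⟨n, hn⟩ := exists_nat_gt (max c δ⁻¹)
    obtain ⟨hn1, hn2⟩ := max_lt_iff.1 hn
    refine ⟨n, fun y _ hy => (hball y (hy.trans ?_)).trans (by gcongr)⟩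
    rw [one_div]
    exact inv_lt_of_inv_lt₀ hδ (hn2.trans (by linarith))
  obtain ⟨n, x₀, hx₀⟩ := nonempty_interior_of_iUnion_of_closed hSc hcover
  obtain ⟨σ₁, hσ₁, hS₁⟩ := Metric.isOpen_iff.1 isOpen_interior x₀ hx₀
  obtain ⟨σ₂, hσ₂, hU₂⟩ := Metric.isOpen_iff.1 hU x₀ x₀.2.1
  have hn0 : (0 : ℝ) < 1 / (n + 1) := by positivity
  obtain ⟨σ, hσ, h1, h2, h3⟩ : ∃ σ > 0, σ ≤ σ₁ ∧ σ ≤ σ₂ ∧ σ ≤ 1 / (n + 1 : ℝ) :=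
    ⟨min σ₁ (min σ₂ (1 / (n + 1))), by positivity, min_le_left _ _,
      (min_le_right _ _).trans (min_le_left _ _), (min_le_right _ _).trans (min_le_right _ _)⟩
  have hUσ : ball (x₀ : ℂ) σ ⊆ U := (ball_subset_ball h2).trans hU₂
  have hPσ : ∀ q ∈ ball (x₀ : ℂ) σ, q ∉ W → ∀ y ∈ U, dist y q < σ → ‖h y - h q‖ ≤ n * ‖y - q‖ :=
    fun q hq hqW y hy hyq => interior_subset (hS₁ (show (⟨q, hUσ hq, hqW⟩ : P) ∈ ball x₀ σ₁ from
      ball_subset_ball h1 hq)) y hy (hyq.trans_le h3)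
  refine x₀.2.2 ⟨n + 3 * C * (n + 1), ?_⟩
  filter_upwards [ball_mem_nhds (x₀ : ℂ) (show 0 < σ / 4 by positivity)] with y hy
  rw [mem_ball] at hy
  have hyσ : y ∈ ball (x₀ : ℂ) σ := by rw [mem_ball]; linarith
  by_cases hyW : y ∈ W
  · have hne : (Wᶜ).Nonempty := ⟨x₀, x₀.2.2⟩
    obtain ⟨q, hqW, hq⟩ := hWo.isClosed_compl.exists_infDist_eq_dist hne y
    have hδ : 0 < infDist y Wᶜ :=
      (hWo.isClosed_compl.notMem_iff_infDist_pos hne).1 fun hc => hc hyW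
    have hδσ : infDist y Wᶜ < σ / 4 := (infDist_le_dist_of_mem x₀.2.2).trans_lt hy
    set δ := infDist y Wᶜ with hδdef
    have hqσ : q ∈ ball (x₀ : ℂ) σ := by
      rw [mem_ball]
      linarith [dist_triangle q y x₀, dist_comm q y]
    have hsub : ball y δ ⊆ ball (x₀ : ℂ) σ := ball_subset_ball' (by linarith)
    have hb : ∀ ζ ∈ ball y δ, ‖h ζ - h y‖ ≤ 3 * (n + 1) * δ := by
      intro ζ hζ
      rw [mem_ball] at hζ
      have e1 := dist_triangle ζ y q
      have e2 := hPσ q hqσ hqW ζ (hUσ (hsub hζ)) (by linarith)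
      have e3 := hPσ q hqσ hqW y (hUσ hyσ) (by linarith)
      rw [← dist_eq_norm ζ q] at e2
      rw [← dist_eq_norm y q] at e3
      have e4 := norm_sub_le_norm_sub_add_norm_sub (h ζ) (h q) (h y)
      rw [norm_sub_rev (h q)] at e4
      have e5 : (n : ℝ) * dist ζ q ≤ n * (2 * δ) := by gcongr; linarith
      have e6 : (n : ℝ) * dist y q = n * δ := by rw [hq]
      nlinarith
    have key := hS y δ (3 * (n + 1) * δ) (hsub.trans hUσ) (fun ζ hζ => by
      by_contra hc
      have := infDist_le_dist_of_mem (x := y) (show ζ ∈ Wᶜ from hc)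
      rw [mem_ball, dist_comm] at hζ
      linarith) (by positivity) hb
    have hle : ‖fderiv ℝ h y‖ ≤ 3 * C * (n + 1) := by
      refine (hh y (hUσ hyσ)).hasFDerivAt.le_of_lip' (by positivity) ?_
      filter_upwards [ball_mem_nhds y hδ] with ζ hζ
      refine (key ζ hζ).trans (le_of_eq ?_)
      field_simp
    linarith [(Nat.cast_nonneg n : (0 : ℝ) ≤ n)]
  · have hle : ‖fderiv ℝ h y‖ ≤ n := by
      refine (hh y (hUσ hyσ)).hasFDerivAt.le_of_lip' (by positivity) ?_
      filter_upwards [ball_mem_nhds y hσ, hU.mem_nhds (hUσ hyσ)] with ζ hζ hζU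
      exact hPσ y hyσ hyW ζ hζU hζ
    have : (0 : ℝ) ≤ 3 * C * (n + 1) := by positivity
    linarith

end LocallyLipschitz

section TwoConstants

/-- The Blaschke factor of the disc of radius `R` vanishing at `a`. -/
def blaschke (R : ℝ) (a z : ℂ) : ℂ := R * (z - a) / (R ^ 2 - (starRingEnd ℂ) a * z)

variable {R ρ : ℝ} {a z : ℂ}

theorem blaschke_denom_ne_zero (ha : ‖a‖ < R) (hz : ‖z‖ ≤ R) :
    (R : ℂ) ^ 2 - (starRingEnd ℂ) a * z ≠ 0 := by
  have hR : 0 < R := (norm_nonneg a).trans_lt ha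
  refine sub_ne_zero.2 fun h => ?_
  have h1 := congrArg norm h
  rw [norm_mul, RCLike.norm_conj, norm_pow, Complex.norm_real, Real.norm_of_nonneg hR.le] at h1
  have : ‖a‖ * ‖z‖ ≤ ‖a‖ * R := by gcongr
  nlinarith

theorem norm_blaschke_of_norm_eq (ha : ‖a‖ < R) (hz : ‖z‖ = R) : ‖blaschke R a z‖ = 1 := by
  have hR : 0 < R := (norm_nonneg a).trans_lt ha
  have h1 : (R : ℂ) ^ 2 - (starRingEnd ℂ) a * z = z * (starRingEnd ℂ) (z - a) := by
    rw [map_sub, mul_sub, Complex.mul_conj', hz]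
    ring
  have h2 := blaschke_denom_ne_zero ha hz.le
  rw [blaschke, norm_div, div_eq_one_iff_eq (norm_ne_zero_iff.2 h2), h1, norm_mul, norm_mul,
    RCLike.norm_conj, hz, Complex.norm_real, Real.norm_of_nonneg hR.le]

theorem norm_sub_div_two_le_norm_blaschke (ha : ‖a‖ < R) (hR : R ≤ 1) (hz : ‖z‖ ≤ R) :
    ‖z - a‖ / 2 ≤ ‖blaschke R a z‖ := by
  have hR0 : 0 < R := (norm_nonneg a).trans_lt ha
  have h2 := norm_pos_iff.2 (blaschke_denom_ne_zero ha hz)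
  have h3 : ‖(R : ℂ) ^ 2 - (starRingEnd ℂ) a * z‖ ≤ 2 * R := by
    refine (norm_sub_le _ _).trans ?_
    rw [norm_mul, RCLike.norm_conj, norm_pow, Complex.norm_real, Real.norm_of_nonneg hR0.le]
    have : ‖a‖ * ‖z‖ ≤ R * R := by gcongr
    nlinarith
  rw [blaschke, norm_div, norm_mul, Complex.norm_real, Real.norm_of_nonneg hR0.le,
    div_le_div_iff₀ two_pos h2]
  nlinarith [norm_nonneg (z - a)]

theorem analyticAt_blaschke (ha : ‖a‖ < R) (hz : ‖z‖ ≤ R) : AnalyticAt ℂ (blaschke R a) z :=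
  AnalyticAt.div (by fun_prop) (by fun_prop) (blaschke_denom_ne_zero ha hz)

theorem blaschke_ne_zero (ha : ‖a‖ < R) (hz : ‖z‖ ≤ R) (hza : z ≠ a) : blaschke R a z ≠ 0 := by
  have hR0 : 0 < R := (norm_nonneg a).trans_lt ha
  exact div_ne_zero (mul_ne_zero (by exact_mod_cast hR0.ne') (sub_ne_zero.2 hza))
    (blaschke_denom_ne_zero ha hz)

/-- A two-constants estimate at the origin. -/
theorem le_neg_mul_of_isSubMeanAt {R₀ m : ℝ} {u : ℂ → ℝ} (hR₀ : 0 < R₀) (hRR : R₀ < R)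
    (hR : R ≤ 1) (hρ : 0 < ρ) (hρ1 : ρ < 2) (hm : 0 ≤ m) (ha : ‖a‖ ≤ R₀)
    (hu : ContinuousOn u (closedBall 0 R)) (hsub : ∀ z ∈ ball (0 : ℂ) R, IsSubMeanAt u z)
    (hu0 : ∀ z ∈ closedBall (0 : ℂ) R, u z ≤ 0)
    (hum : ∀ z ∈ closedBall (0 : ℂ) R, ‖z - a‖ ≤ ρ → u z ≤ -m) :
    u 0 ≤ -(min 1 (Real.log (R / R₀) / Real.log (2 / ρ)) * m) := by
  have hR0 : 0 < R := hR₀.trans hRR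
  have haR : ‖a‖ < R := ha.trans_lt hRR
  have h0 : (0 : ℂ) ∈ closedBall (0 : ℂ) R := mem_closedBall_self hR0.le
  have hτ : 0 < Real.log (2 / ρ) := Real.log_pos ((one_lt_div hρ).2 hρ1)
  rcases le_or_gt ‖a‖ ρ with haρ | haρ
  · refine (hum 0 h0 (by simpa using haρ)).trans (neg_le_neg ?_)
    exact mul_le_of_le_one_left hm (min_le_left _ _)
  set k := m / Real.log (2 / ρ) with hk
  have hk0 : 0 ≤ k := by positivity
  set A : Set ℂ := closedBall 0 R \ ball a ρ with hA
  have hAn : ∀ {z}, z ∈ A → ‖z‖ ≤ R := fun hz => by simpa using hz.1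
  have hAa : ∀ {z}, z ∈ A → z ≠ a := fun hz => by
    rintro rfl
    exact hz.2 (mem_ball_self hρ)
  set v : ℂ → ℝ := fun z => u z + -k * Real.log ‖blaschke R a z‖ with hv
  have hvc : ContinuousOn v A := by
    refine (hu.mono sdiff_subset).add (continuousOn_const.mul (ContinuousOn.log ?_ ?_))
    · exact fun z hz =>
        (analyticAt_blaschke haR (hAn hz)).continuousAt.norm.continuousWithinAt
    · exact fun z hz => norm_ne_zero_iff.2 (blaschke_ne_zero haR (hAn hz) (hAa hz))
  have key : v 0 ≤ 0 := by
    refine le_of_forall_isLocalMax_eventually_eq (S := sphere 0 R ∪ sphere a ρ) (u := v)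
      ((isCompact_closedBall 0 R).diff isOpen_ball) hvc (fun ξ hξ hξS => ?_) (fun ξ hξ hξS => ?_)
      (⟨h0, fun hc => ?_⟩ : (0 : ℂ) ∈ A)
    · have hξρ : ρ < dist ξ a :=
        lt_of_le_of_ne (not_lt.1 hξ.2) fun he => hξS (Or.inr he.symm)
      have hξR : ξ ∈ ball 0 R := lt_of_le_of_ne hξ.1 fun he => hξS (Or.inl he)
      refine ⟨?_, IsSubMeanAt.eventually_eq_of_isLocalMax ((hsub ξ hξR).add
        (isSubMeanAt_of_harmonicAt (((analyticAt_blaschke haR (hAn hξ)).harmonicAt_log_norm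
          (blaschke_ne_zero haR (hAn hξ) (hAa hξ))).const_smul (c := -k))))⟩
      filter_upwards [isOpen_ball.mem_nhds hξR,
        isClosed_closedBall.isOpen_compl.mem_nhds (show ξ ∈ (closedBall a ρ)ᶜ by simpa using hξρ)]
        with x hx1 hx2
      exact ⟨ball_subset_closedBall hx1, fun hx => hx2 (ball_subset_closedBall hx)⟩
    · rcases hξS with hξS | hξS
      · have : ‖ξ‖ = R := by simpa using hξS
        simpa [hv, norm_blaschke_of_norm_eq haR this] using hu0 ξ hξ.1
      · rw [mem_sphere, dist_eq_norm] at hξS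
        have h1 := hum ξ hξ.1 hξS.le
        have h2 := norm_sub_div_two_le_norm_blaschke haR hR (hAn hξ)
        rw [hξS] at h2
        have h3 : -Real.log (2 / ρ) ≤ Real.log ‖blaschke R a ξ‖ := by
          rw [← Real.log_inv, inv_div]
          exact Real.log_le_log (by positivity) h2
        have h4 : k * Real.log (2 / ρ) = m := div_mul_cancel₀ _ hτ.ne'
        simp only [hv]
        nlinarith [mul_le_mul_of_nonneg_left h3 hk0]
    · rw [mem_ball, dist_eq_norm, zero_sub, norm_neg] at hc
      exact absurd hc haρ.not_gt
  have hb0 : ‖blaschke R a 0‖ = ‖a‖ / R := by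
    simp only [blaschke, zero_sub, mul_zero, sub_zero, norm_div, norm_mul, norm_neg, norm_pow,
      Complex.norm_real, Real.norm_of_nonneg hR0.le]
    field_simp
  have h5 : Real.log ‖blaschke R a 0‖ ≤ -Real.log (R / R₀) := by
    rw [hb0, ← Real.log_inv, inv_div]
    have := hρ.trans haρ
    exact Real.log_le_log (by positivity) (by gcongr)
  have h6 : min 1 (Real.log (R / R₀) / Real.log (2 / ρ)) * m ≤ k * Real.log (R / R₀) := by
    calc _ ≤ Real.log (R / R₀) / Real.log (2 / ρ) * m := by gcongr; exact min_le_right _ _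
      _ = _ := by rw [hk]; ring
  simp only [hv] at key
  nlinarith [mul_le_mul_of_nonneg_left h5 hk0]

end TwoConstants

theorem IsJDisc.comp_left {V : Type*} [NormedAddCommGroup V] [NormedSpace ℂ V] {D : Set V}
    {J : V → V →L[ℝ] V} {f : V → V} {h : ℂ → V} (hf : IsHolomorphicMapOn J J f D)
    (hfD : MapsTo f D D) (hh : IsJDisc J D h) : IsJDisc J D fun ζ => f (h ζ) := by
  refine ⟨hfD.comp hh.1, fun ζ hζ => ?_⟩
  obtain ⟨h1, h2⟩ := hh.2 ζ hζ
  obtain ⟨h3, h4⟩ := hf _ (hh.1 hζ)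
  refine ⟨h3.comp ζ h1, ?_⟩
  rw [fderiv_fun_comp ζ h3 h1, ContinuousLinearMap.comp_assoc, h2, ← ContinuousLinearMap.comp_assoc,
    h4, ContinuousLinearMap.comp_assoc]

section Attraction

variable {V : Type*} [NormedAddCommGroup V] [NormedSpace ℂ V] [ProperSpace V]
  {Ω K D : Set V} {J : V → V →L[ℝ] V} {r : V → ℝ} {G₀ : V →L[ℝ] V →L[ℝ] ℝ}

theorem exists_sub_norm_sq_plurisubharmonic (hΩ : IsOpen Ω) (hJ : IsACS Ω J)
    (hr : ContDiffOn ℝ 2 r Ω) (hpsh : StrictPSHOn J r Ω) (hK : IsCompact K) (hKΩ : K ⊆ Ω)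
    (hG₀ : ∀ x, G₀ x x = ‖x‖ ^ 2) (p : V) :
    ∃ c > 0, ∀ y ∈ K, ContDiffAt ℝ 2 (fun y => r y + -c * ‖y - p‖ ^ 2) y ∧
      ∀ X, 0 ≤ leviForm J (fun y => r y + -c * ‖y - p‖ ^ 2) y X := by
  have hq : ContDiff ℝ 2 fun y => ‖y - p‖ ^ 2 := by
    have : (fun y => ‖y - p‖ ^ 2) = fun y => G₀ (y - p) (y - p) := by simp only [hG₀]
    rw [this]
    fun_prop
  obtain ⟨lam, hlam, h1⟩ := exists_pos_mul_norm_sq_le_leviForm hΩ hJ.smooth hr hpsh hK hKΩ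
  obtain ⟨M, hM, h2⟩ := exists_leviForm_le_mul_norm_sq hΩ hJ.smooth hq.contDiffOn hK hKΩ
  refine ⟨lam / M, by positivity, fun y hy => ?_⟩
  have hry : ContDiffAt ℝ 2 r y := hr.contDiffAt (hΩ.mem_nhds (hKΩ hy))
  refine ⟨hry.add (contDiffAt_const.mul hq.contDiffAt), fun X => ?_⟩
  rw [leviForm_add_const_mul _ ((hJ.smooth.contDiffAt (hΩ.mem_nhds (hKΩ hy))).differentiableAt
    (by simp)) hry hq.contDiffAt]
  have h3 : lam / M * leviForm J (fun y => ‖y - p‖ ^ 2) y X ≤ lam / M * (M * ‖X‖ ^ 2) := by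
    gcongr
    exact h2 y hy X
  have h4 : lam / M * (M * ‖X‖ ^ 2) = lam * ‖X‖ ^ 2 := by field_simp
  linarith [h1 y hy X]

/-- A function peaking at `p` controls the discs which leave a neighbourhood of `p`. -/
theorem exists_peak_le_neg_of_norm_sub_ge (hΩ : IsOpen Ω) (hJ : IsACS Ω J)
    (hr : ContDiffOn ℝ 2 r Ω) (hpsh : StrictPSHOn J r Ω) (hD : IsCompact (closure D))
    (hDΩ : closure D ⊆ Ω) (hrD : ∀ x ∈ D, r x < 0) (hsymm : ∀ x y, G₀ x y = G₀ y x)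
    (hG₀ : ∀ x, G₀ x x = ‖x‖ ^ 2) (p : V) :
    ∃ c : ℝ, ∀ R₀ > 0, R₀ < 1 → ∀ ε > 0, ∃ η > 0, ∀ h : ℂ → V, IsJDisc J D h →
      ∀ ζ : ℂ, ‖ζ‖ ≤ R₀ → ε ≤ ‖h ζ - p‖ → r (h 0) + -c * ‖h 0 - p‖ ^ 2 ≤ -η := by
  obtain ⟨c, hc, hφ⟩ := exists_sub_norm_sq_plurisubharmonic hΩ hJ hr hpsh hD hDΩ hG₀ p
  obtain ⟨C, hC, hS⟩ := exists_norm_sub_le_of_isCRAt hΩ hJ hr hpsh hD hDΩ hsymm hG₀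
  obtain ⟨T, hT⟩ := hD.isBounded.exists_norm_le
  refine ⟨c, fun R₀ hR₀ hR₀1 ε hε => ?_⟩
  set R := (1 + R₀) / 2 with hR
  set d := R - R₀ with hd
  have hd0 : 0 < d := by linarith
  have hM : 0 < 2 * |T| + 1 := by positivity
  set M := 2 * |T| + 1 with hMdef
  set ρ := min (d / 2) (ε * d / (2 * C * M)) with hρ
  have hρ0 : 0 < ρ := by positivity
  have hρd : ρ ≤ d / 2 := min_le_left _ _
  have hρ2 : ρ < 2 := by linarith
  have hlog : 0 < Real.log (R / R₀) := Real.log_pos ((one_lt_div hR₀).2 (by linarith))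
  have hτ : 0 < Real.log (2 / ρ) := Real.log_pos ((one_lt_div hρ0).2 hρ2)
  refine ⟨min 1 (Real.log (R / R₀) / Real.log (2 / ρ)) * (c * (ε / 2) ^ 2), by positivity,
    fun h hh ζ hζ hεζ => ?_⟩
  have hmem : ∀ z ∈ ball (0 : ℂ) 1, h z ∈ closure D := fun z hz => subset_closure (hh.1 hz)
  have hosc : ∀ z ∈ ball (0 : ℂ) 1, ∀ w ∈ ball (0 : ℂ) 1, ‖h z - h w‖ ≤ M := fun z hz w hw => by
    linarith [norm_sub_le (h z) (h w), hT _ (hmem z hz), hT _ (hmem w hw), le_abs_self T]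
  have hbdd := eventually_norm_fderiv_le_of_schwarz (h := h) isOpen_ball
    (fun z hz => (hh.2 z hz).1) hC fun z d M hzd hL hM' hos => hS h z d M
      (fun w hw => hmem w (hzd hw)) (fun w hw => hh.2 w (hzd hw)) hL hM' hos
  have hRball : closedBall (0 : ℂ) R ⊆ ball 0 1 := closedBall_subset_ball (by linarith)
  have hζd : ball ζ d ⊆ ball 0 1 := ball_subset_ball' (by rw [dist_zero_right]; linarith)
  have hζ1 : ζ ∈ ball (0 : ℂ) 1 := hζd (mem_ball_self hd0)
  refine le_neg_mul_of_isSubMeanAt (u := fun z => r (h z) + -c * ‖h z - p‖ ^ 2) hR₀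
    (by linarith : R₀ < R) (by linarith) hρ0 hρ2 (by positivity) hζ ?_ ?_ ?_ ?_
  · intro z hz
    exact ((hφ _ (hmem z (hRball hz))).1.continuousAt.comp (f := h)
      (hh.2 z (hRball hz)).1.continuousAt).continuousWithinAt
  · intro z hz
    have hz1 : ∀ᶠ w in 𝓝 z, w ∈ ball (0 : ℂ) 1 :=
      isOpen_ball.mem_nhds (hRball (ball_subset_closedBall hz))
    obtain ⟨L, hL⟩ := hbdd z hz1.self_of_nhds
    exact isSubMeanAt_comp (Ψ := fun y => r y + -c * ‖y - p‖ ^ 2)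
      (hz1.mono fun w hw => hh.2 w hw) hL
      (hz1.mono fun w hw => (hJ.smooth.contDiffAt
        (hΩ.mem_nhds (hDΩ (hmem w hw)))).differentiableAt (by simp))
      (hz1.mono fun w hw => (hφ _ (hmem w hw)).1) (hz1.mono fun w hw => (hφ _ (hmem w hw)).2)
  · intro z hz
    have := hrD _ (hh.1 (hRball hz))
    have : 0 ≤ c * ‖h z - p‖ ^ 2 := by positivity
    linarith
  · intro z hz hzρ
    have h1 := hrD _ (hh.1 (hRball hz))
    have h2 := hS h ζ d M (fun w hw => hmem w (hζd hw)) (fun w hw => hh.2 w (hζd hw))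
      (fun w hw => hbdd w (hζd hw)) hM (fun w hw => hosc w (hζd hw) ζ hζ1) z
      (by rw [mem_ball, dist_eq_norm]; linarith)
    have h3 : C * M * ‖z - ζ‖ / d ≤ ε / 2 := by
      rw [div_le_iff₀ hd0]
      calc C * M * ‖z - ζ‖ ≤ C * M * (ε * d / (2 * C * M)) := by
            gcongr
            exact hzρ.trans (min_le_right _ _)
        _ = _ := by field_simp
    have h4 := norm_sub_le_norm_sub_add_norm_sub (h ζ) (h z) p
    rw [norm_sub_rev (h ζ) (h z)] at h4
    have h5 : c * (ε / 2) ^ 2 ≤ c * ‖h z - p‖ ^ 2 := by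
      gcongr
      linarith
    linarith

end Attraction

/-- **Uniform attraction along `J`-holomorphic discs.** If the automorphism orbit
`f^ν(x⁰)` converges to `p ∈ ∂D`, then `f^ν ∘ f (K) → p` uniformly over all
`J`-holomorphic discs `f : Δ → D` with `f(0) = x⁰`. -/
theorem statement13
    (Ω : Set E2) (hΩ : IsOpen Ω) (J : E2 → E2 →L[ℝ] E2) (hJ : IsACS Ω J)
    (r : E2 → ℝ) (hr : ContDiffOn ℝ 2 r Ω) (hrpsh : StrictPSHOn J r Ω)
    (D : Set E2) (hDdef : D = {x ∈ Ω | r x < 0})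
    (hDcomp : IsCompact (closure D)) (hDΩ : closure D ⊆ Ω)
    (hdr : ∀ x ∈ frontier D, fderiv ℝ r x ≠ 0)
    (x0 : E2) (hx0 : x0 ∈ D) (p : E2) (hp : p ∈ frontier D)
    (f g : ℕ → E2 → E2)
    (hdiffeo : ∀ ν, IsDiffeoOn (f ν) (g ν) D D)
    (hhol : ∀ ν, IsHolomorphicMapOn J J (f ν) D)
    (horbit : Tendsto (fun ν => f ν x0) atTop (𝓝 p)) :
    ∀ K : Set ℂ, IsCompact K → K ⊆ ball (0 : ℂ) 1 → (0 : ℂ) ∈ K →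
      ∀ ε > 0, ∃ N : ℕ, ∀ ν ≥ N, ∀ h : ℂ → E2, IsJDisc J D h → h 0 = x0 →
        ∀ ζ ∈ K, ‖f ν (h ζ) - p‖ < ε := by
  intro K hK hK1 _ ε hε
  have hDo : IsOpen D := hDdef ▸ hr.continuousOn.isOpen_inter_preimage hΩ isOpen_Iio
  have hpΩ : p ∈ Ω := hDΩ hp.1
  have hrp : 0 ≤ r p := by
    by_contra! hneg
    refine hp.2 (hDo.interior_eq.symm ▸ ?_)
    rw [hDdef]
    exact ⟨hpΩ, hneg⟩
  obtain ⟨c, hc⟩ := exists_peak_le_neg_of_norm_sub_ge (G₀ := innerSL ℝ) hΩ hJ hr hrpsh hDcomp hDΩ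
    (fun x hx => (hDdef ▸ hx : x ∈ {x ∈ Ω | r x < 0}).2) (fun x y => by rw [innerSL_apply_apply, innerSL_apply_apply, real_inner_comm])
    (fun x => real_inner_self_eq_norm_sq x) p
  obtain ⟨R₀, hR₀, hR₀1, hKR⟩ : ∃ R₀ > 0, R₀ < 1 ∧ K ⊆ closedBall (0 : ℂ) R₀ := by
    obtain ⟨s, hs, hKs⟩ := exists_pos_lt_subset_ball one_pos hK.isClosed hK1
    exact ⟨s, hs.1, hs.2, hKs.trans ball_subset_closedBall⟩
  obtain ⟨η, hη, hpeak⟩ := hc R₀ hR₀ hR₀1 ε hε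
  have hcont : ContinuousAt (fun y => r y + -c * ‖y - p‖ ^ 2) p :=
    (hr.continuousOn.continuousAt (hΩ.mem_nhds hpΩ)).add (by fun_prop)
  have hev : ∀ᶠ ν in atTop, -η < r (f ν x0) + -c * ‖f ν x0 - p‖ ^ 2 :=
    (hcont.tendsto.comp horbit).eventually (lt_mem_nhds (by simp; linarith))
  obtain ⟨N, hN⟩ := eventually_atTop.1 hev
  refine ⟨N, fun ν hν h hh hh0 ζ hζ => ?_⟩
  by_contra! hge
  have := hpeak _ (hh.comp_left (hhol ν) (hdiffeo ν).2.2.1) ζ (by simpa using hKR hζ) hge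
  rw [hh0] at this
  exact absurd (hN ν hν) this.not_gt

end
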